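/- Let G be a cactus graph on n vertices with k cycles. If G is not unipath resolved, then there exists a unipath resolved cactus graph G′ on n vertices with k cycles such that gpn(G′) > gpn(G). -/

import Mathlib

/-!
The proof is extremal. Write `total G` for the number of geodesics summed over ordered pairs, so
that `2 * gpn G = total G + n`, and call a cactus maximal (`MaxCactus`) if it maximizes `total`
among the cacti with the same vertices and the same number of cycles. Maximal cacti exist since
there are finitely many graphs, and every maximal cactus is unipath resolved. So if a cactus is not
unipath resolved, it is not maximal, and any maximal one beats it.

Geodesic counts are multiplicative along cut vertices (`numGeodesics_mul`). This is exploited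
through gated sets (`Gate`): sets `S` with a retraction `r` onto `S` such that every edge between
different fibres of `r` lies inside `S`. Every cycle of a cactus is gated (`cycle_gate`).

A set `B` of vertices attached to the rest only at `x` can be reattached at `y`. This keeps the
graph a cactus with the same number of cycles and changes `total` by an explicit product
(`move_total`), so in a maximal cactus the vertex `x` sends at least as many geodesics to the
complement of `B` as `y` does (`MaxCactus.move_le`), and in case of equality the new cactus is
maximal too (`MaxCactus.move_maximal`). Three consequences follow.
* No two adjacent vertices of a square are active (`MaxCactus.not_adjacent_active`): the
  inequalities around the square would make all four active with equal weights at adjacent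
  vertices, and moving one hanging part onto a neighbour would give a maximal cactus violating them.
* A vertex on two squares has no other neighbour (`MaxCactus.no_two_squares`).
* Two squared vertices are never joined by a path outside the squares (`MaxCactus.no_two_squared`):
  sliding one square to the other vertex changes nothing in `total`, and leads to the previous
  case.

Finally, a maximal cactus has no cycle of length at least five (`MaxCactus.isGirthRestricted`). Two
vertices of a cycle are joined by at most two geodesics inside it, and by two only when they are
antipodal (`numGeodesics_cycle`). Replace the cycle by a square through two antipodal (or nearly
antipodal) vertices `a`, `b`, with the remaining vertices of the two arcs hung as stars on the other
two corners. All antipodal pairs still have two geodesics, other pairs lose nothing, and some pair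
gains one (`total_lt`). That the number of cycles is preserved follows from the formula expressing
it through the numbers of edges and vertices (`IsCactus.card_cycles`); being a cactus is tested by
the uniqueness of detours around edges (`UniqueDetour`, `isCactus_iff`).
-/

open SimpleGraph

/-- The number of geodesics (shortest paths) in `G` between `u` and `v`. -/
noncomputable def numGeodesics {V : Type*} (G : SimpleGraph V) (u v : V) : ℕ :=
  {p : G.Walk u v | p.IsPath ∧ p.length = G.dist u v}.ncard

lemma numGeodesics_comm {V : Type*} (G : SimpleGraph V) (u v : V) :
    numGeodesics G u v = numGeodesics G v u := by
  have himg : {p : G.Walk v u | p.IsPath ∧ p.length = G.dist v u} =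
      (fun p : G.Walk u v => p.reverse) '' {p : G.Walk u v | p.IsPath ∧ p.length = G.dist u v} := by
    ext p
    constructor
    · rintro ⟨hp, hl⟩
      exact ⟨p.reverse, ⟨hp.reverse, by
        rw [SimpleGraph.Walk.length_reverse, hl, SimpleGraph.dist_comm]⟩, p.reverse_reverse⟩
    · rintro ⟨q, ⟨hq, hl⟩, rfl⟩
      exact ⟨hq.reverse, by rw [SimpleGraph.Walk.length_reverse, hl, SimpleGraph.dist_comm]⟩
  have hinj : Function.Injective (fun p : G.Walk u v => p.reverse) := by
    intro p q h
    simpa using congrArg SimpleGraph.Walk.reverse h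
  unfold numGeodesics
  rw [himg, Set.ncard_image_of_injective _ hinj]

/-- The geodesic subpath number of a finite graph: the sum, over unordered pairs of
distinct vertices, of the number of geodesics between them, plus `n` for the `n`
geodesics of length zero. -/
noncomputable def gpn {V : Type*} [Fintype V] [DecidableEq V] (G : SimpleGraph V) : ℕ :=
  (∑ e ∈ Finset.univ.filter (fun e : Sym2 V => ¬ e.IsDiag),
      Sym2.lift ⟨fun u v => numGeodesics G u v, fun u v => numGeodesics_comm G u v⟩ e)
    + Fintype.card V

/-- The cycles of `G`, recorded as their edge sets. -/
def cycleEdgeSets {V : Type*} (G : SimpleGraph V) : Set (Set (Sym2 V)) :=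
  {s | ∃ (u : V) (c : G.Walk u u), c.IsCycle ∧ s = {e | e ∈ c.edges}}

/-- A cactus graph: a connected graph in which all cycles are pairwise edge-disjoint. -/
def IsCactus {V : Type*} (G : SimpleGraph V) : Prop :=
  G.Connected ∧ (cycleEdgeSets G).Pairwise Disjoint

/-- A girth restricted cactus graph: every cycle is a triangle or a square. -/
def IsGirthRestricted {V : Type*} (G : SimpleGraph V) : Prop :=
  ∀ (u : V) (c : G.Walk u u), c.IsCycle → c.length = 3 ∨ c.length = 4

/-- A vertex of a cactus graph is cyclic if it lies on a cycle; it is active if moreover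
its degree is at least `3`. -/
def IsActiveVertex {V : Type*} (G : SimpleGraph V) (v : V) : Prop :=
  (∃ (u : V) (c : G.Walk u u), c.IsCycle ∧ v ∈ c.support) ∧ 3 ≤ (G.neighborSet v).ncard

/-- An antipodal cactus graph: a girth restricted cactus in which every multiactive
square (a `4`-cycle with at least two active vertices) is antipodal, i.e. it has exactly
two active vertices and they form an antipodal (opposite) pair of the square. -/
def IsAntipodalCactus {V : Type*} (G : SimpleGraph V) : Prop :=
  IsCactus G ∧ IsGirthRestricted G ∧
    ∀ (u : V) (c : G.Walk u u), c.IsCycle → c.length = 4 →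
      (∃ x y : V, x ≠ y ∧ x ∈ c.support ∧ y ∈ c.support ∧
        IsActiveVertex G x ∧ IsActiveVertex G y) →
      ∃ x y : V, x ≠ y ∧ x ∈ c.support ∧ y ∈ c.support ∧
        IsActiveVertex G x ∧ IsActiveVertex G y ∧ s(x, y) ∉ c.edges ∧
        ∀ z ∈ c.support, IsActiveVertex G z → z = x ∨ z = y

/-- The set `E_S` of edges of `G` which belong to squares (cycles of length `4`). -/
def squareEdges {V : Type*} (G : SimpleGraph V) : Set (Sym2 V) :=
  {e | ∃ (u : V) (c : G.Walk u u), c.IsCycle ∧ c.length = 4 ∧ e ∈ c.edges}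

/-- The squares of `G`, recorded as their edge sets. -/
def squareEdgeSets {V : Type*} (G : SimpleGraph V) : Set (Set (Sym2 V)) :=
  {s | ∃ (u : V) (c : G.Walk u u), c.IsCycle ∧ c.length = 4 ∧ s = {e | e ∈ c.edges}}

/-- A squared vertex: a vertex which belongs to a square. -/
def IsSquaredVertex {V : Type*} (G : SimpleGraph V) (v : V) : Prop :=
  ∃ (u : V) (c : G.Walk u u), c.IsCycle ∧ c.length = 4 ∧ v ∈ c.support

/-- The squares of `G` (as edge sets) which contain the vertex `v`. -/
def squaresOn {V : Type*} (G : SimpleGraph V) (v : V) : Set (Set (Sym2 V)) :=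
  {s ∈ squareEdgeSets G | ∃ e ∈ s, v ∈ e}

/-- A unipath resolved graph: an antipodal cactus graph in which every unipath structure
(non-trivial component of `G − E_S`) is good, i.e. contains at most one squared vertex,
and such a vertex belongs to exactly one square. -/
def IsUnipathResolved {V : Type*} (G : SimpleGraph V) : Prop :=
  IsAntipodalCactus G ∧
    ∀ C : (G.deleteEdges (squareEdges G)).ConnectedComponent, C.supp.Nontrivial →
      {v ∈ C.supp | IsSquaredVertex G v}.Subsingleton ∧
        ∀ v ∈ C.supp, IsSquaredVertex G v → (squaresOn G v).ncard = 1


namespace CactusGPN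

open Walk

variable {V : Type*}

/-! ### Cacti through unique detours -/

/-- Every edge with both ends in `S` has at most one detour, i.e. path joining its ends
without using it. For `S = univ` this says that every edge lies on at most one cycle. -/
def UniqueDetour (G : SimpleGraph V) (S : Set V) : Prop :=
  ∀ u ∈ S, ∀ v ∈ S, G.Adj u v → ∀ p q : G.Walk u v, p.IsPath → q.IsPath →
    s(u, v) ∉ p.edges → s(u, v) ∉ q.edges → p = q

lemma path_eq_of_edges_subset {G : SimpleGraph V} {u v : V} (p q : G.Walk u v) (hp : p.IsPath)
    (hq : q.IsPath) (h : p.edges ⊆ q.edges) : p = q := by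
  induction p with
  | nil => exact ((isPath_iff_nil.mp hq).eq_nil).symm
  | @cons u w v hadj p ih =>
    cases q with
    | nil => exact absurd (p.end_mem_support) ((cons_isPath_iff _ _).1 hp).2
    | @cons _ w' _ hadj' q =>
      rw [cons_isPath_iff] at hp hq
      have hw : w = w' := by
        have h1 : s(u, w) ∈ (Walk.cons hadj' q).edges := h (by simp)
        rw [edges_cons, List.mem_cons] at h1
        rcases h1 with h1 | h1
        · exact Sym2.congr_right.1 h1
        · exact absurd (q.fst_mem_support_of_mem_edges h1) hq.2
      subst hw
      congr 1
      refine ih q hp.1 hq.1 fun e he => ?_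
      have h1 : e ∈ (Walk.cons hadj' q).edges := h (by simp [he])
      rw [edges_cons, List.mem_cons] at h1
      rcases h1 with rfl | h1
      · exact absurd (p.fst_mem_support_of_mem_edges he) hp.2
      · exact h1

/-- A cycle through the edge `xy` is this edge together with a detour from `x` to `y`. -/
lemma exists_detour_of_cycle {G : SimpleGraph V} {u x y : V} {c : G.Walk u u} (hc : c.IsCycle)
    (he : s(x, y) ∈ c.edges) :
    ∃ p : G.Walk x y, p.IsPath ∧ s(x, y) ∉ p.edges ∧
      (∀ e, e ∈ c.edges ↔ e = s(x, y) ∨ e ∈ p.edges) := by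
  classical
  have hx : x ∈ c.support := c.fst_mem_support_of_mem_edges he
  have hc' := hc.rotate hx
  have hee : ∀ e, e ∈ c.edges ↔ e ∈ (c.rotate x hx).edges :=
    fun e => ((c.rotate_edges x hx).mem_iff).symm
  generalize c.rotate x hx = c' at hc' hee
  simp only [hee] at he ⊢
  cases c' with
  | nil => simp at he
  | @cons _ w _ h q =>
    rw [cons_isCycle_iff] at hc'
    by_cases hwy : w = y
    · subst hwy
      exact ⟨q.reverse, hc'.1.reverse, by simpa using hc'.2, by simp⟩
    · have he' : s(x, y) ∈ q.reverse.edges := by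
        simp only [edges_cons, List.mem_cons, Sym2.congr_right] at he
        simpa [Ne.symm hwy] using he
      have hqr := hc'.1.reverse
      have hqe : ∀ e, e ∈ q.edges ↔ e ∈ q.reverse.edges := by simp
      have hnot := hc'.2
      simp only [edges_cons, List.mem_cons, hqe] at hnot ⊢
      generalize q.reverse = q' at hqr he' hqe hnot
      cases q' with
      | nil => simp at he'
      | @cons _ y' _ h2 q2 =>
        rw [cons_isPath_iff] at hqr
        have hy : y = y' := by
          rw [edges_cons, List.mem_cons] at he'
          rcases he' with h1 | h1
          · exact Sym2.congr_right.1 h1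
          · exact absurd (q2.fst_mem_support_of_mem_edges h1) hqr.2
        subst hy
        refine ⟨Walk.cons h q2.reverse, ?_, ?_, ?_⟩
        · rw [cons_isPath_iff]
          exact ⟨hqr.1.reverse, by simpa using hqr.2⟩
        · simp only [edges_cons, List.mem_cons, edges_reverse, List.mem_reverse, not_or,
            Sym2.congr_right]
          exact ⟨fun h => hwy h.symm, fun h => hqr.2 (q2.fst_mem_support_of_mem_edges h)⟩
        · intro e
          simp only [edges_cons, List.mem_cons, edges_reverse, List.mem_reverse]
          tauto

lemma IsCactus.edges_iff {G : SimpleGraph V} (hG : IsCactus G) {u v : V} {c : G.Walk u u}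
    {d : G.Walk v v} (hc : c.IsCycle) (hd : d.IsCycle) {e : Sym2 V} (h1 : e ∈ c.edges)
    (h2 : e ∈ d.edges) : ∀ e', e' ∈ c.edges ↔ e' ∈ d.edges := by
  by_contra hne
  have h3 := hG.2 (show {e | e ∈ c.edges} ∈ cycleEdgeSets G from ⟨u, c, hc, rfl⟩)
    (show {e | e ∈ d.edges} ∈ cycleEdgeSets G from ⟨v, d, hd, rfl⟩)
    (fun h => hne fun e' => Set.ext_iff.1 h e')
  exact Set.disjoint_left.1 h3 h1 h2

lemma isCactus_iff {G : SimpleGraph V} :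
    IsCactus G ↔ G.Connected ∧ UniqueDetour G Set.univ := by
  constructor
  · refine fun hG => ⟨hG.1, fun u _ v _ hadj p q hp hq hpe hqe => ?_⟩
    have h1 : (Walk.cons hadj.symm p).IsCycle := by
      rw [cons_isCycle_iff, Sym2.eq_swap]; exact ⟨hp, hpe⟩
    have h2 : (Walk.cons hadj.symm q).IsCycle := by
      rw [cons_isCycle_iff, Sym2.eq_swap]; exact ⟨hq, hqe⟩
    have h3 := IsCactus.edges_iff hG h1 h2 (e := s(v, u)) (by simp) (by simp)
    refine path_eq_of_edges_subset p q hp hq fun e he => ?_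
    have h4 := (h3 e).1 (by simp [he])
    rw [edges_cons, List.mem_cons] at h4
    rcases h4 with rfl | h4
    · exact absurd (by rwa [Sym2.eq_swap]) hpe
    · exact h4
  · rintro ⟨hG, hU⟩
    refine ⟨hG, ?_⟩
    rintro _ ⟨u, c, hc, rfl⟩ _ ⟨v, d, hd, rfl⟩ hne
    rw [Set.disjoint_left]
    intro e h1 h2
    apply hne
    induction e with | _ x y
    obtain ⟨p, hp, hpe, hp'⟩ := exists_detour_of_cycle hc h1
    obtain ⟨q, hq, hqe, hq'⟩ := exists_detour_of_cycle hd h2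
    have := hU x trivial y trivial (c.adj_of_mem_edges h1) p q hp hq hpe hqe
    subst this
    ext e
    simp [hp', hq']

lemma IsCactus.uniqueDetour {G : SimpleGraph V} (hG : IsCactus G) (S : Set V) :
    UniqueDetour G S :=
  fun u _ v _ => (isCactus_iff.1 hG).2 u trivial v trivial

/-- In a cactus the cyclomatic number counts the cycles. -/
lemma IsCactus.card_cycles [Fintype V] {G : SimpleGraph V} (hG : IsCactus G) :
    (cycleEdgeSets G).ncard + Fintype.card V = G.edgeSet.ncard + 1 := by
  classical
  induction h : G.edgeSet.ncard using Nat.strong_induction_on generalizing G with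
  | _ n ih =>
  subst h
  by_cases hac : G.IsAcyclic
  · have h1 : cycleEdgeSets G = ∅ := by
      rw [Set.eq_empty_iff_forall_notMem]
      rintro _ ⟨u, c, hc, -⟩
      exact hac c hc
    have h2 := (IsTree.mk hG.1 hac).card_edgeFinset
    rw [h1, Set.ncard_empty, Set.ncard_eq_toFinset_card', ← h2]
    simp [edgeFinset]
  · simp only [IsAcyclic, not_forall, not_not] at hac
    obtain ⟨u, c, hc⟩ := hac
    obtain ⟨e, he⟩ : ∃ e, e ∈ c.edges := List.exists_mem_of_ne_nil _ (by
      intro h; have := hc.three_le_length; rw [← length_edges, h] at this; simp at this)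
    induction e with | _ x y
    have heG : s(x, y) ∈ G.edgeSet := c.edges_subset_edgeSet he
    have hle : G.deleteEdges {s(x, y)} ≤ G := deleteEdges_le _
    have hcyc : cycleEdgeSets (G.deleteEdges {s(x, y)}) =
        cycleEdgeSets G \ {{e | e ∈ c.edges}} := by
      ext t
      constructor
      · rintro ⟨v, d, hd, rfl⟩
        refine ⟨⟨v, d.mapLe hle, hd.mapLe hle, by simp⟩, fun h => ?_⟩
        have h1 : s(x, y) ∈ d.edges := by
          have := Set.ext_iff.1 h s(x, y)
          exact this.2 he
        have := d.edges_subset_edgeSet h1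
        simp at this
      · rintro ⟨⟨v, d, hd, rfl⟩, hne⟩
        have h1 : s(x, y) ∉ d.edges := fun h1 => hne (by
          ext e'; exact (IsCactus.edges_iff hG hd hc h1 he e'))
        have h2 : ∀ e ∈ d.edges, e ∈ (G.deleteEdges {s(x, y)}).edgeSet := by
          intro e he
          rw [edgeSet_deleteEdges]
          exact ⟨d.edges_subset_edgeSet he, by rintro rfl; exact h1 he⟩
        exact ⟨v, d.transfer _ h2, hd.transfer h2, by simp⟩
    have hcon : (G.deleteEdges {s(x, y)}).Connected :=
      hG.1.connected_delete_edge_of_not_isBridge fun h => h.notMem_edges_of_isCycle hc he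
    have hcac : IsCactus (G.deleteEdges {s(x, y)}) := by
      refine ⟨hcon, ?_⟩
      rw [hcyc]
      exact hG.2.mono Set.sdiff_subset
    have hed : (G.deleteEdges {s(x, y)}).edgeSet.ncard + 1 = G.edgeSet.ncard := by
      rw [edgeSet_deleteEdges]
      exact Set.ncard_sdiff_singleton_add_one heG
    have h1 := ih _ (by omega) hcac rfl
    have h2 : (cycleEdgeSets (G.deleteEdges {s(x, y)})).ncard + 1 = (cycleEdgeSets G).ncard := by
      rw [hcyc]
      exact Set.ncard_sdiff_singleton_add_one ⟨u, c, hc, rfl⟩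
    omega


/-! ### Counting geodesics -/

/-- The set of geodesics from `u` to `v`. -/
def geodesics (G : SimpleGraph V) (u v : V) : Set (G.Walk u v) := {p | p.length = G.dist u v}

lemma numGeodesics_eq (G : SimpleGraph V) (u v : V) :
    numGeodesics G u v = (geodesics G u v).ncard := by
  unfold numGeodesics geodesics
  congr 1
  ext p
  exact ⟨fun h => h.2, fun h => ⟨p.isPath_of_length_eq_dist h, h⟩⟩

lemma geodesics_finite [Finite V] (G : SimpleGraph V) (u v : V) : (geodesics G u v).Finite := by
  classical
  have := Fintype.ofFinite V
  exact Set.toFinite {p : G.Walk u v | p.length = G.dist u v}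

lemma numGeodesics_self (G : SimpleGraph V) (u : V) : numGeodesics G u u = 1 := by
  rw [numGeodesics_eq, Set.ncard_eq_one]
  refine ⟨Walk.nil, ?_⟩
  ext p
  simp only [geodesics, dist_self, Set.mem_ofPred_eq, Set.mem_singleton_iff]
  exact ⟨fun h => (length_eq_zero_iff.1 h).eq_nil, fun h => by rw [h]; rfl⟩

lemma numGeodesics_adj {G : SimpleGraph V} {u v : V} (h : G.Adj u v) : numGeodesics G u v = 1 := by
  rw [numGeodesics_eq, Set.ncard_eq_one]
  refine ⟨h.toWalk, ?_⟩
  ext p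
  simp only [geodesics, dist_eq_one_iff_adj.2 h, Set.mem_ofPred_eq, Set.mem_singleton_iff]
  constructor
  · intro hp
    cases p with
    | nil => simp at hp
    | cons h' p =>
      cases p with
      | nil => rfl
      | cons h'' p => simp at hp
  · rintro rfl
    rfl

lemma numGeodesics_pos [Finite V] {G : SimpleGraph V} {u v : V} (h : G.Reachable u v) :
    1 ≤ numGeodesics G u v := by
  rw [numGeodesics_eq, Nat.one_le_iff_ne_zero, ← Nat.pos_iff_ne_zero,
    Set.ncard_pos (geodesics_finite G u v)]
  obtain ⟨p, hp⟩ := h.exists_walk_length_eq_dist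
  exact ⟨p, hp⟩

/-- Geodesic counts are multiplicative at a vertex met by every walk between two vertices. -/
lemma numGeodesics_mul {G : SimpleGraph V} (hG : G.Connected) {u x v : V}
    (h : ∀ p : G.Walk u v, x ∈ p.support) :
    numGeodesics G u v = numGeodesics G u x * numGeodesics G x v := by
  classical
  have hd : G.dist u v = G.dist u x + G.dist x v := by
    refine le_antisymm hG.dist_triangle ?_
    obtain ⟨p, hp⟩ := hG.exists_walk_length_eq_dist u v
    have h1 := congrArg Walk.length (p.take_spec (h p))
    rw [length_append] at h1
    have h2 := dist_le (p.takeUntil x (h p))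
    have h3 := dist_le (p.dropUntil x (h p))
    omega
  rw [numGeodesics_eq, numGeodesics_eq, numGeodesics_eq, ← Set.ncard_prod]
  have himg : geodesics G u v =
      (fun z : G.Walk u x × G.Walk x v => z.1.append z.2) '' (geodesics G u x ×ˢ geodesics G x v) := by
    ext p
    constructor
    · intro hp
      have h1 := congrArg Walk.length (p.take_spec (h p))
      rw [length_append] at h1
      have h2 := dist_le (p.takeUntil x (h p))
      have h3 := dist_le (p.dropUntil x (h p))
      have hp' : p.length = G.dist u v := hp
      refine ⟨⟨p.takeUntil x (h p), p.dropUntil x (h p)⟩, ⟨?_, ?_⟩, p.take_spec (h p)⟩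
      · change (p.takeUntil x (h p)).length = _
        omega
      · change (p.dropUntil x (h p)).length = _
        omega
    · rintro ⟨⟨q, r⟩, ⟨hq, hr⟩, rfl⟩
      have hq' : q.length = G.dist u x := hq
      have hr' : r.length = G.dist x v := hr
      change (q.append r).length = _
      rw [length_append, hq', hr', hd]
  rw [himg]
  refine Set.InjOn.ncard_image ?_
  rintro ⟨q, r⟩ ⟨hq, hr⟩ ⟨q', r'⟩ ⟨hq', hr'⟩ heq
  have hq1 : q.length = G.dist u x := hq
  have hq1' : q'.length = G.dist u x := hq'
  have h1 : (q.append r).support = (q'.append r').support := congrArg Walk.support heq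
  rw [support_append, support_append] at h1
  obtain ⟨h2, h3⟩ := List.append_inj h1 (by rw [length_support, length_support, hq1, hq1'])
  have h4 : q = q' := ext_support h2
  have h5 : r = r' := by
    apply ext_support
    rw [← r.cons_tail_support, ← r'.cons_tail_support, h3]
  rw [h4, h5]

lemma dist_iso_le {W : Type*} {G : SimpleGraph V} {G' : SimpleGraph W} (φ : G ≃g G')
    (hG : G.Connected) (u v : V) : G'.dist (φ u) (φ v) ≤ G.dist u v := by
  obtain ⟨p, hp⟩ := hG.exists_walk_length_eq_dist u v
  rw [← hp, ← p.length_map φ.toHom]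
  exact dist_le _

lemma dist_iso {W : Type*} {G : SimpleGraph V} {G' : SimpleGraph W} (φ : G ≃g G')
    (hG : G.Connected) (u v : V) : G'.dist (φ u) (φ v) = G.dist u v := by
  refine le_antisymm (dist_iso_le φ hG u v) ?_
  simpa using dist_iso_le φ.symm (φ.connected_iff.1 hG) (φ u) (φ v)

lemma numGeodesics_iso_le {W : Type*} [Finite W] {G : SimpleGraph V} {G' : SimpleGraph W}
    (φ : G ≃g G') (hG : G.Connected) (u v : V) :
    numGeodesics G u v ≤ numGeodesics G' (φ u) (φ v) := by
  rw [numGeodesics_eq, numGeodesics_eq]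
  refine Set.ncard_le_ncard_of_injOn (fun p => p.map φ.toHom) ?_ ?_ (geodesics_finite _ _ _)
  · intro p hp
    have hp' : p.length = G.dist u v := hp
    change (p.map φ.toHom).length = _
    rw [length_map, hp', ← dist_iso φ hG]
  · exact fun p _ q _ h => map_injective_of_injective φ.injective u v h

lemma numGeodesics_iso {W : Type*} [Finite V] [Finite W] {G : SimpleGraph V} {G' : SimpleGraph W}
    (φ : G ≃g G') (hG : G.Connected) (u v : V) :
    numGeodesics G' (φ u) (φ v) = numGeodesics G u v := by
  refine le_antisymm ?_ (numGeodesics_iso_le φ hG u v)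
  simpa using numGeodesics_iso_le φ.symm (φ.connected_iff.1 hG) (φ u) (φ v)

/-- The number of geodesics summed over all ordered pairs of vertices. -/
noncomputable def total [Fintype V] (G : SimpleGraph V) : ℕ := ∑ u, ∑ v, numGeodesics G u v

lemma two_mul_gpn [Fintype V] [DecidableEq V] (G : SimpleGraph V) :
    2 * gpn G = total G + Fintype.card V := by
  have h1 : total G = ∑ z : V × V, numGeodesics G z.1 z.2 := by
    rw [Fintype.sum_prod_type]; rfl
  have h2 : ∑ z : V × V, numGeodesics G z.1 z.2 =
      ∑ z ∈ Finset.univ.filter (fun z : V × V => z.1 = z.2), numGeodesics G z.1 z.2 +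
      ∑ z ∈ Finset.univ.filter (fun z : V × V => ¬ z.1 = z.2), numGeodesics G z.1 z.2 :=
    (Finset.sum_filter_add_sum_filter_not _ _ _).symm
  have h3 : ∑ z ∈ Finset.univ.filter (fun z : V × V => z.1 = z.2), numGeodesics G z.1 z.2
      = Fintype.card V := by
    have : Finset.univ.filter (fun z : V × V => z.1 = z.2) =
        Finset.univ.image (fun v : V => (v, v)) := by
      ext ⟨a, b⟩
      simp
    rw [this, Finset.sum_image (by intro a _ b _ h; exact congrArg Prod.fst h)]
    simp [numGeodesics_self]
  have h4 : ∑ z ∈ Finset.univ.filter (fun z : V × V => ¬ z.1 = z.2), numGeodesics G z.1 z.2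
      = 2 * ∑ e ∈ Finset.univ.filter (fun e : Sym2 V => ¬ e.IsDiag),
      Sym2.lift ⟨fun u v => numGeodesics G u v, fun u v => numGeodesics_comm G u v⟩ e := by
    rw [← Finset.sum_fiberwise_of_maps_to (t := Finset.univ.filter (fun e : Sym2 V => ¬ e.IsDiag))
      (g := fun z : V × V => s(z.1, z.2)) (by rintro ⟨a, b⟩; simp), Finset.mul_sum]
    refine Finset.sum_congr rfl fun e he => ?_
    induction e with | _ a b
    have hab : a ≠ b := by simpa using he
    have : (Finset.univ.filter (fun z : V × V => ¬ z.1 = z.2)).filter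
        (fun z : V × V => s(z.1, z.2) = s(a, b)) = {(a, b), (b, a)} := by
      ext ⟨x, y⟩
      simp only [Finset.mem_filter, Finset.mem_univ, true_and, Sym2.eq_iff, Finset.mem_insert,
        Finset.mem_singleton, Prod.mk.injEq]
      constructor
      · exact fun h => h.2
      · rintro (⟨rfl, rfl⟩ | ⟨rfl, rfl⟩)
        · exact ⟨hab, Or.inl ⟨rfl, rfl⟩⟩
        · exact ⟨hab.symm, Or.inr ⟨rfl, rfl⟩⟩
    rw [this, Finset.sum_pair (by simp [hab])]
    simp only [Sym2.lift_mk]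
    rw [numGeodesics_comm G b a]
    ring
  unfold gpn
  rw [h1, h2, h3, h4]
  ring

/-! ### Gated sets -/

/-- `S` is gated in `G` with gate map `r`: every vertex `v` has an entry point `r v` into `S`,
and the only edges joining vertices with different entry points are those inside `S`. -/
structure Gate (G : SimpleGraph V) (S : Set V) (r : V → V) : Prop where
  mem : ∀ v, r v ∈ S
  fix : ∀ v ∈ S, r v = v
  step : ∀ u v, G.Adj u v → r u = r v ∨ (u ∈ S ∧ v ∈ S)

/-- Every path between vertices of `S` stays in `S`. -/
def PathConvex (G : SimpleGraph V) (S : Set V) : Prop :=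
  ∀ u ∈ S, ∀ v ∈ S, ∀ p : G.Walk u v, p.IsPath → ∀ w ∈ p.support, w ∈ S

namespace Gate

variable {G : SimpleGraph V} {S : Set V} {r : V → V}

lemma mem_support (h : Gate G S r) {u v : V} (p : G.Walk u v) (hv : v ∈ S) : r u ∈ p.support := by
  induction p with
  | nil => rw [h.fix _ hv]; simp
  | @cons u w v hadj p ih =>
    rcases h.step _ _ hadj with h1 | h1
    · rw [h1]
      exact List.mem_cons_of_mem _ (ih hv)
    · rw [h.fix _ h1.1]
      simp

lemma mem_support' (h : Gate G S r) {u v : V} (p : G.Walk v u) (hv : v ∈ S) :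
    r u ∈ p.support := by
  simpa using h.mem_support p.reverse hv

lemma pathConvex (h : Gate G S r) : PathConvex G S := by
  intro u hu v hv p hp
  induction p with
  | nil => simpa using hu
  | @cons u w v hadj p ih =>
    rw [cons_isPath_iff] at hp
    have hw : w ∈ S := by
      by_contra hw
      rcases h.step _ _ hadj with h1 | h1
      · rw [h.fix _ hu] at h1
        have := h.mem_support p hv
        rw [← h1] at this
        exact hp.2 this
      · exact hw h1.2
    intro x hx
    rw [support_cons, List.mem_cons] at hx
    rcases hx with rfl | hx
    · exact hu
    · exact ih hw hv hp.1 x hx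

open Classical in
/-- The fibre of a gate map over a vertex of `S` is gated too. -/
lemma fibre (h : Gate G S r) {i : V} (hi : i ∈ S) :
    Gate G {v | r v = i} (fun v => if r v = i then v else i) where
  mem v := by
    by_cases hv : r v = i
    · simp [hv]
    · simp [hv, h.fix i hi]
  fix v hv := by
    have : r v = i := hv
    simp [this]
  step u v hadj := by
    rcases h.step u v hadj with h1 | ⟨hu, hv⟩
    · by_cases h2 : r u = i
      · exact Or.inr ⟨h2, show r v = i by rw [← h1, h2]⟩
      · left
        rw [if_neg h2, if_neg (h1 ▸ h2)]
    · rw [h.fix u hu, h.fix v hv]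
      left
      by_cases h1 : u = i <;> by_cases h2 : v = i <;> simp [h1, h2]

lemma mem_support_left (h : Gate G S r) {u v : V} (p : G.Walk u v) (huv : r u ≠ r v) :
    r u ∈ p.support := by
  have := (h.fibre (h.mem u)).mem_support' p rfl
  simpa [huv.symm] using this

lemma numGeodesics_right (h : Gate G S r) (hG : G.Connected) (u : V) {v : V} (hv : v ∈ S) :
    numGeodesics G u v = numGeodesics G u (r u) * numGeodesics G (r u) v :=
  numGeodesics_mul hG fun p => h.mem_support p hv

lemma numGeodesics_left (h : Gate G S r) (hG : G.Connected) {u : V} (v : V) (hu : u ∈ S) :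
    numGeodesics G u v = numGeodesics G u (r v) * numGeodesics G (r v) v :=
  numGeodesics_mul hG fun p => h.mem_support' p hu

lemma numGeodesics_of_ne (h : Gate G S r) (hG : G.Connected) {u v : V} (huv : r u ≠ r v) :
    numGeodesics G u v =
      numGeodesics G u (r u) * numGeodesics G (r u) (r v) * numGeodesics G (r v) v := by
  rw [numGeodesics_mul hG fun p => h.mem_support_left p huv,
    h.numGeodesics_left hG v (h.mem u), mul_assoc]

end Gate

/-! ### Graphs which agree on a convex set -/

/-- `S` is convex in both graphs, which have the same edges inside `S`. -/
structure Agree (G G' : SimpleGraph V) (S : Set V) : Prop where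
  conv : PathConvex G S
  conv' : PathConvex G' S
  adj : ∀ u ∈ S, ∀ v ∈ S, (G.Adj u v ↔ G'.Adj u v)

namespace Agree

variable {G G' : SimpleGraph V} {S : Set V}

lemma symm (h : Agree G G' S) : Agree G' G S :=
  ⟨h.conv', h.conv, fun u hu v hv => (h.adj u hu v hv).symm⟩

lemma edges (h : Agree G G' S) {u v : V} (hu : u ∈ S) (hv : v ∈ S) {p : G.Walk u v}
    (hp : p.IsPath) : ∀ e ∈ p.edges, e ∈ G'.edgeSet := by
  intro e he
  induction e with | _ x y
  exact (h.adj x (h.conv u hu v hv p hp _ (p.fst_mem_support_of_mem_edges he)) y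
    (h.conv u hu v hv p hp _ (p.snd_mem_support_of_mem_edges he))).1 (p.adj_of_mem_edges he)

lemma reachable (h : Agree G G' S) {u v : V} (hu : u ∈ S) (hv : v ∈ S) (hr : G.Reachable u v) :
    G'.Reachable u v := by
  obtain ⟨p, hp⟩ := hr.exists_isPath
  exact ⟨p.transfer G' (h.edges hu hv hp)⟩

lemma dist_le (h : Agree G G' S) (hG : G.Connected) {u v : V} (hu : u ∈ S) (hv : v ∈ S) :
    G'.dist u v ≤ G.dist u v := by
  obtain ⟨p, hp, hl⟩ := hG.exists_path_of_dist u v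
  rw [← hl, ← p.length_transfer (h.edges hu hv hp)]
  exact SimpleGraph.dist_le _

lemma dist (h : Agree G G' S) (hG : G.Connected) (hG' : G'.Connected) {u v : V} (hu : u ∈ S)
    (hv : v ∈ S) : G'.dist u v = G.dist u v :=
  le_antisymm (h.dist_le hG hu hv) (h.symm.dist_le hG' hu hv)

lemma numGeodesics_le [Finite V] (h : Agree G G' S) (hG : G.Connected) (hG' : G'.Connected)
    {u v : V} (hu : u ∈ S) (hv : v ∈ S) : numGeodesics G u v ≤ numGeodesics G' u v := by
  classical
  rw [numGeodesics_eq, numGeodesics_eq]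
  have key : ∀ p ∈ geodesics G u v, p.IsPath := fun p hp => p.isPath_of_length_eq_dist hp
  refine Set.ncard_le_ncard_of_injOn
    (fun p => if hp : p.IsPath then p.transfer G' (h.edges hu hv hp) else
      (h.reachable hu hv (hG u v)).some) ?_ ?_ (geodesics_finite _ _ _)
  · intro p hp
    simp only [dif_pos (key p hp)]
    change (p.transfer G' _).length = _
    rw [length_transfer, h.dist hG hG' hu hv]
    exact hp
  · intro p hp q hq heq
    simp only [dif_pos (key p hp), dif_pos (key q hq)] at heq
    have := congrArg Walk.support heq
    rw [support_transfer, support_transfer] at this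
    exact ext_support this

lemma numGeodesics [Finite V] (h : Agree G G' S) (hG : G.Connected) (hG' : G'.Connected)
    {u v : V} (hu : u ∈ S) (hv : v ∈ S) : numGeodesics G' u v = numGeodesics G u v :=
  le_antisymm (h.symm.numGeodesics_le hG' hG hu hv) (h.numGeodesics_le hG hG' hu hv)

lemma uniqueDetour (h : Agree G G' S) (hU : UniqueDetour G S) : UniqueDetour G' S := by
  intro u hu v hv hadj p q hp hq hpe hqe
  have := hU u hu v hv ((h.adj u hu v hv).2 hadj) (p.transfer G (h.symm.edges hu hv hp))
    (q.transfer G (h.symm.edges hu hv hq)) (hp.transfer _) (hq.transfer _)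
    (by rwa [edges_transfer]) (by rwa [edges_transfer])
  have := congrArg Walk.support this
  rw [support_transfer, support_transfer] at this
  exact ext_support this

end Agree

/-! ### Moving a hanging part of a cactus -/

lemma uniqueDetour_of_iso {W : Type*} {G : SimpleGraph V} {G' : SimpleGraph W} (φ : G ≃g G')
    (h : UniqueDetour G' Set.univ) : UniqueDetour G Set.univ := by
  intro u _ v _ hadj p q hp hq hpe hqe
  have key : ∀ p : G.Walk u v, s(u, v) ∉ p.edges → s(φ u, φ v) ∉ (p.map φ.toHom).edges := by
    intro p hp h
    rw [edges_map, List.mem_map] at h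
    obtain ⟨e, he, h⟩ := h
    have : e = s(u, v) := Sym2.map.injective φ.injective h
    exact hp (this ▸ he)
  exact map_injective_of_injective φ.injective u v
    (h (φ u) trivial (φ v) trivial (φ.map_adj_iff.2 hadj) (p.map φ.toHom) (q.map φ.toHom)
      (hp.map φ.injective) (hq.map φ.injective)
      (key p hpe) (key q hqe))

lemma ncard_adj_pairs [Fintype V] (G : SimpleGraph V) :
    {z : V × V | G.Adj z.1 z.2}.ncard = 2 * G.edgeSet.ncard := by
  classical
  rw [Set.ncard_eq_toFinset_card', Set.ncard_eq_toFinset_card']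
  have := G.two_mul_card_edgeFinset
  rw [edgeFinset] at this
  rw [this]
  congr 1
  ext ⟨a, b⟩
  simp

/-- The part `B` hangs at `x`: the only vertex outside `B` with neighbours in `B` is `x`. -/
def Hang (G : SimpleGraph V) (B : Finset V) (x : V) : Prop :=
  x ∉ B ∧ ∀ u ∈ B, ∀ v ∉ B, G.Adj u v → v = x

/-- The graph obtained when the part `B`, hanging at `x`, is detached from `x` and attached in the
same way at `y`. -/
def move (G : SimpleGraph V) (B : Finset V) (x y : V) : SimpleGraph V where
  Adj u v := (u ∈ B ∧ v ∈ B ∧ G.Adj u v) ∨ (u ∉ B ∧ v ∉ B ∧ G.Adj u v) ∨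
    (u ∈ B ∧ v ∉ B ∧ v = y ∧ G.Adj u x) ∨ (v ∈ B ∧ u ∉ B ∧ u = y ∧ G.Adj v x)
  symm := ⟨fun u v h => by
    rcases h with h | h | h | h
    · exact Or.inl ⟨h.2.1, h.1, h.2.2.symm⟩
    · exact Or.inr (Or.inl ⟨h.2.1, h.1, h.2.2.symm⟩)
    · exact Or.inr (Or.inr (Or.inr h))
    · exact Or.inr (Or.inr (Or.inl h))⟩
  loopless := ⟨fun u h => by
    rcases h with h | h | h | h
    · exact G.irrefl h.2.2
    · exact G.irrefl h.2.2
    · exact h.2.1 h.1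
    · exact h.2.1 h.1⟩

lemma Hang.move {G : SimpleGraph V} {B : Finset V} {x y : V} (hy : y ∉ B) : Hang (move G B x y) B y := by
  refine ⟨hy, ?_⟩
  rintro u hu v hv (h | h | h | h)
  · exact absurd h.2.1 hv
  · exact absurd hu h.1
  · exact h.2.2.1
  · exact absurd h.1 hv

section Move

variable [DecidableEq V] {G : SimpleGraph V} {B : Finset V} {x y : V}

lemma Hang.gate (h : Hang G B x) :
    Gate G {v | v = x ∨ v ∈ B} (fun v => if v ∈ B then v else x) where
  mem v := by by_cases hv : v ∈ B <;> simp [hv]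
  fix v hv := by
    rcases hv with rfl | hv
    · simp
    · simp [hv]
  step u v hadj := by
    by_cases hu : u ∈ B <;> by_cases hv : v ∈ B
    · exact Or.inr ⟨Or.inr hu, Or.inr hv⟩
    · exact Or.inr ⟨Or.inr hu, Or.inl (h.2 u hu v hv hadj)⟩
    · exact Or.inr ⟨Or.inl (h.2 v hv u hu hadj.symm), Or.inr hv⟩
    · simp [hu, hv]

lemma Hang.gate' (h : Hang G B x) :
    Gate G {v | v ∉ B} (fun v => if v ∈ B then x else v) where
  mem v := by
    by_cases hv : v ∈ B
    · simp [hv, h.1]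
    · simp [hv]
  fix v hv := by
    have : v ∉ B := hv
    simp [this]
  step u v hadj := by
    by_cases hu : u ∈ B <;> by_cases hv : v ∈ B
    · simp [hu, hv]
    · simp [hu, h.2 u hu v hv hadj]
    · simp [hv, h.2 v hv u hu hadj.symm]
    · exact Or.inr ⟨hu, hv⟩

lemma agree_rest (h : Hang G B x) (hy : y ∉ B) : Agree G (CactusGPN.move G B x y) {v | v ∉ B} where
  conv := h.gate'.pathConvex
  conv' := (Hang.move hy).gate'.pathConvex
  adj u hu v hv := by
    have hu : u ∉ B := hu
    have hv : v ∉ B := hv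
    simp [CactusGPN.move, hu, hv]

/-- Together with its new point of attachment, the moved part looks as it did before. -/
lemma agree_part (h : Hang G B x) (hy : y ∉ B) :
    Agree (G.comap (Equiv.swap x y)) (CactusGPN.move G B x y) {v | v = y ∨ v ∈ B} := by
  have hB : ∀ u ∈ B, Equiv.swap x y u = u := fun u hu =>
    Equiv.swap_apply_of_ne_of_ne (by rintro rfl; exact h.1 hu) (by rintro rfl; exact hy hu)
  have hc : Hang (G.comap (Equiv.swap x y)) B y := by
    refine ⟨hy, fun u hu v hv hadj => ?_⟩
    have hadj' : G.Adj (Equiv.swap x y u) (Equiv.swap x y v) := hadj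
    rw [hB u hu] at hadj'
    have hv' : Equiv.swap x y v ∉ B := by
      intro h'
      have := hB _ h'
      rw [Equiv.swap_apply_self] at this
      exact hv (this ▸ h')
    have := h.2 u hu _ hv' hadj'
    rw [Equiv.swap_apply_eq_iff, Equiv.swap_apply_left] at this
    exact this
  refine ⟨hc.gate.pathConvex, (Hang.move hy).gate.pathConvex, ?_⟩
  rintro u (rfl | hu) v (rfl | hv)
  · simp
  · simp [CactusGPN.move, hv, hy, hB v hv, G.adj_comm]
  · simp [CactusGPN.move, hu, hy, hB u hu]
  · simp [CactusGPN.move, hu, hv, hB u hu, hB v hv]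

lemma move_move (h : Hang G B x) (hy : y ∉ B) :
    CactusGPN.move (CactusGPN.move G B x y) B y x = G := by
  have hx := h.1
  have h2 := h.2
  ext u v
  by_cases hu : u ∈ B <;> by_cases hv : v ∈ B
  · simp [CactusGPN.move, hu, hv]
  · simp only [CactusGPN.move, hu, hv, hy]
    have := h2 u hu v hv
    constructor
    · simp
      rintro rfl h; exact h
    · intro h
      simp [this h]
      rw [← this h]; exact h
  · simp only [CactusGPN.move, hu, hv, hy]
    have := h2 v hv u hu
    constructor
    · simp
      rintro rfl h; exact h.symm
    · intro h
      simp [this h.symm]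
      rw [← this h.symm]; exact h.symm
  · simp [CactusGPN.move, hu, hv]

lemma move_edges_le [Fintype V] (h : Hang G B x) (hy : y ∉ B) :
    G.edgeSet.ncard ≤ (CactusGPN.move G B x y).edgeSet.ncard := by
  have hx := h.1
  have h2 := h.2
  suffices {z : V × V | G.Adj z.1 z.2}.ncard ≤
      {z : V × V | (CactusGPN.move G B x y).Adj z.1 z.2}.ncard by
    rw [ncard_adj_pairs, ncard_adj_pairs] at this
    omega
  refine Set.ncard_le_ncard_of_injOn (fun z : V × V =>
    (if z.1 ∉ B ∧ z.2 ∈ B then y else z.1, if z.2 ∉ B ∧ z.1 ∈ B then y else z.2)) ?_ ?_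
    (Set.toFinite _)
  · rintro ⟨u, v⟩ hadj
    have hadj : G.Adj u v := hadj
    change (CactusGPN.move G B x y).Adj _ _
    have := h2 u
    have := h2 v
    have := hadj.symm
    by_cases hu : u ∈ B <;> by_cases hv : v ∈ B
    · simp [CactusGPN.move, hu, hv, hadj]
    · simp [CactusGPN.move, hu, hv, hy, ← h2 u hu v hv hadj, hadj]
    · simp [CactusGPN.move, hu, hv, hy, ← h2 v hv u hu hadj.symm, hadj.symm]
    · simp [CactusGPN.move, hu, hv, hadj]
  · rintro ⟨u, v⟩ hadj ⟨u', v'⟩ hadj' heq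
    have hadj : G.Adj u v := hadj
    have hadj' : G.Adj u' v' := hadj'
    simp only [Prod.mk.injEq] at heq ⊢
    have := h2 u
    have := h2 v
    have := h2 u'
    have := h2 v'
    have := hadj.symm
    have := hadj'.symm
    grind

lemma move_isCactus (hG : IsCactus G) (h : Hang G B x) (hy : y ∉ B) :
    IsCactus (CactusGPN.move G B x y) := by
  rw [isCactus_iff] at hG ⊢
  have φ : G.comap (Equiv.swap x y) ≃g G := Iso.comap (Equiv.swap x y) G
  have hr := agree_rest h hy
  have hp := agree_part h hy
  have hcon : (G.comap (Equiv.swap x y)).Connected := φ.connected_iff.2 hG.1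
  have hreach : ∀ v, (CactusGPN.move G B x y).Reachable y v := by
    intro v
    by_cases hv : v ∈ B
    · exact hp.reachable (Or.inl rfl) (Or.inr hv) (hcon y v)
    · exact hr.reachable hy hv (hG.1 y v)
  refine ⟨(connected_iff_exists_forall_reachable _).2 ⟨y, hreach⟩, ?_⟩
  intro u _ v _ hadj
  have h1 := hr.uniqueDetour (fun u _ v _ => hG.2 u trivial v trivial)
  have h2 := hp.uniqueDetour
    (fun u _ v _ => uniqueDetour_of_iso φ hG.2 u trivial v trivial)
  by_cases hu : u ∈ B <;> by_cases hv : v ∈ B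
  · exact h2 u (Or.inr hu) v (Or.inr hv) hadj
  · exact h2 u (Or.inr hu) v (Or.inl ((Hang.move hy).2 u hu v hv hadj)) hadj
  · exact h2 u (Or.inl ((Hang.move hy).2 v hv u hu hadj.symm)) v (Or.inr hv) hadj
  · exact h1 u hu v hv hadj

variable [Fintype V]

lemma move_cycles (hG : IsCactus G) (h : Hang G B x) (hy : y ∉ B) :
    (cycleEdgeSets (CactusGPN.move G B x y)).ncard = (cycleEdgeSets G).ncard := by
  have h1 := IsCactus.card_cycles hG
  have h2 := IsCactus.card_cycles (move_isCactus hG h hy)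
  have h3 := move_edges_le h hy
  have h4 := move_edges_le (Hang.move (G := G) (x := x) hy) h.1
  rw [move_move h hy] at h4
  omega

lemma Hang.total (h : Hang G B x) (hG : G.Connected) :
    total G = ∑ u ∈ B, ∑ v ∈ B, numGeodesics G u v + ∑ u ∈ Bᶜ, ∑ v ∈ Bᶜ, numGeodesics G u v +
      2 * ((∑ u ∈ B, numGeodesics G u x) * ∑ v ∈ Bᶜ, numGeodesics G x v) := by
  have h1 : ∀ u ∈ B, ∀ v ∈ Bᶜ, numGeodesics G u v = numGeodesics G u x * numGeodesics G x v := by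
    intro u hu v hv
    have hv : v ∉ B := by simpa using hv
    have := h.gate'.numGeodesics_right hG u (v := v) hv
    simpa [hu] using this
  have h2 : ∑ u ∈ B, ∑ v ∈ Bᶜ, numGeodesics G u v =
      (∑ u ∈ B, numGeodesics G u x) * ∑ v ∈ Bᶜ, numGeodesics G x v := by
    rw [Finset.sum_mul_sum]
    exact Finset.sum_congr rfl fun u hu => Finset.sum_congr rfl fun v hv => h1 u hu v hv
  have h3 : ∑ u ∈ Bᶜ, ∑ v ∈ B, numGeodesics G u v = ∑ u ∈ B, ∑ v ∈ Bᶜ, numGeodesics G u v := by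
    rw [Finset.sum_comm]
    exact Finset.sum_congr rfl fun u hu => Finset.sum_congr rfl fun v hv =>
      numGeodesics_comm G v u
  unfold CactusGPN.total
  rw [← Finset.sum_add_sum_compl B]
  have h4 : ∀ u, ∑ v, numGeodesics G u v =
      ∑ v ∈ B, numGeodesics G u v + ∑ v ∈ Bᶜ, numGeodesics G u v :=
    fun u => (Finset.sum_add_sum_compl B _).symm
  simp only [h4, Finset.sum_add_distrib]
  rw [h3, h2]
  ring

/-- The effect of a move on the number of geodesics. -/
lemma move_total (hG : IsCactus G) (h : Hang G B x) (hy : y ∉ B) :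
    total (CactusGPN.move G B x y) +
      2 * ((∑ u ∈ B, numGeodesics G u x) * ∑ v ∈ Bᶜ, numGeodesics G x v) =
    total G + 2 * ((∑ u ∈ B, numGeodesics G u x) * ∑ v ∈ Bᶜ, numGeodesics G y v) := by
  have hG' := move_isCactus hG h hy
  have φ : G.comap (Equiv.swap x y) ≃g G := Iso.comap (Equiv.swap x y) G
  have hcon : (G.comap (Equiv.swap x y)).Connected := φ.connected_iff.2 hG.1
  have hr : ∀ u ∉ B, ∀ v ∉ B, numGeodesics (CactusGPN.move G B x y) u v = numGeodesics G u v :=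
    fun u hu v hv => (agree_rest h hy).numGeodesics hG.1 hG'.1 hu hv
  have hp : ∀ u ∈ {v | v = y ∨ v ∈ B}, ∀ v ∈ {v | v = y ∨ v ∈ B},
      numGeodesics (CactusGPN.move G B x y) u v =
        numGeodesics G (Equiv.swap x y u) (Equiv.swap x y v) := by
    intro u hu v hv
    rw [(agree_part h hy).numGeodesics hcon hG'.1 hu hv]
    exact (numGeodesics_iso (Iso.comap (Equiv.swap x y) G) hcon u v).symm
  have hB : ∀ u ∈ B, Equiv.swap x y u = u := fun u hu =>
    Equiv.swap_apply_of_ne_of_ne (by rintro rfl; exact h.1 hu) (by rintro rfl; exact hy hu)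
  have e1 : ∑ u ∈ B, ∑ v ∈ B, numGeodesics (CactusGPN.move G B x y) u v =
      ∑ u ∈ B, ∑ v ∈ B, numGeodesics G u v :=
    Finset.sum_congr rfl fun u hu => Finset.sum_congr rfl fun v hv => by
      rw [hp u (Or.inr hu) v (Or.inr hv), hB u hu, hB v hv]
  have e2 : ∑ u ∈ Bᶜ, ∑ v ∈ Bᶜ, numGeodesics (CactusGPN.move G B x y) u v =
      ∑ u ∈ Bᶜ, ∑ v ∈ Bᶜ, numGeodesics G u v :=
    Finset.sum_congr rfl fun u hu => Finset.sum_congr rfl fun v hv => by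
      rw [hr u (by simpa using hu) v (by simpa using hv)]
  have e3 : ∑ u ∈ B, numGeodesics (CactusGPN.move G B x y) u y =
      ∑ u ∈ B, numGeodesics G u x :=
    Finset.sum_congr rfl fun u hu => by
      rw [hp u (Or.inr hu) y (Or.inl rfl), hB u hu, Equiv.swap_apply_right]
  have e4 : ∑ v ∈ Bᶜ, numGeodesics (CactusGPN.move G B x y) y v =
      ∑ v ∈ Bᶜ, numGeodesics G y v :=
    Finset.sum_congr rfl fun v hv => by rw [hr y hy v (by simpa using hv)]
  have t1 := h.total hG.1
  have t2 := (Hang.move (G := G) (x := x) hy).total hG'.1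
  rw [e1, e2, e3, e4] at t2
  omega

end Move

/-! ### Maximal cacti -/

/-- A cactus with the largest number of geodesics among the cacti on the same vertices with the
same number of cycles. -/
def MaxCactus [Fintype V] (G : SimpleGraph V) : Prop :=
  IsCactus G ∧ ∀ G' : SimpleGraph V, IsCactus G' →
    (cycleEdgeSets G').ncard = (cycleEdgeSets G).ncard → total G' ≤ total G

section

variable [Fintype V] [DecidableEq V] {G : SimpleGraph V} {B : Finset V} {x y : V}

lemma MaxCactus.move_le (hG : MaxCactus G) (h : Hang G B x) (hB : B.Nonempty) (hy : y ∉ B) :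
    ∑ v ∈ Bᶜ, numGeodesics G y v ≤ ∑ v ∈ Bᶜ, numGeodesics G x v := by
  have h1 := move_total hG.1 h hy
  have h2 := hG.2 _ (move_isCactus hG.1 h hy) (move_cycles hG.1 h hy)
  have h3 : 0 < ∑ u ∈ B, numGeodesics G u x :=
    Finset.sum_pos (fun u _ => numGeodesics_pos (hG.1.1 u x)) hB
  refine Nat.le_of_mul_le_mul_left ?_ h3
  omega

lemma MaxCactus.move_maximal (hG : MaxCactus G) (h : Hang G B x) (hy : y ∉ B)
    (he : ∑ v ∈ Bᶜ, numGeodesics G y v = ∑ v ∈ Bᶜ, numGeodesics G x v) :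
    MaxCactus (move G B x y) := by
  have h1 := move_total hG.1 h hy
  rw [he] at h1
  refine ⟨move_isCactus hG.1 h hy, fun G' hG' hc => ?_⟩
  have := hG.2 G' hG' (by rw [hc, move_cycles hG.1 h hy])
  omega

end

/-! ### Cycles of a cactus are gated -/

section CycleGate

variable {G : SimpleGraph V}

/-- Removing the edges of a cycle of a cactus separates the vertices of this cycle. -/
lemma cycle_separated (hG : IsCactus G) {u : V} {c : G.Walk u u} (hc : c.IsCycle) {x y : V}
    (hx : x ∈ c.support) (hy : y ∈ c.support)
    (h : (G.deleteEdges {e | e ∈ c.edges}).Reachable x y) : x = y := by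
  classical
  by_contra hxy
  obtain ⟨P, hP⟩ := h.exists_isPath
  have hle : G.deleteEdges {e | e ∈ c.edges} ≤ G := deleteEdges_le _
  have hPe : ∀ e ∈ (P.mapLe hle).edges, e ∉ c.edges := by
    intro e he
    rw [edges_mapLe_eq_edges] at he
    have := P.edges_subset_edgeSet he
    rw [edgeSet_deleteEdges] at this
    exact this.2
  have hP' := hP.mapLe hle
  generalize P.mapLe hle = p at hPe hP'
  have hc' := hc.rotate hx
  have hee : ∀ e, e ∈ (c.rotate x hx).edges ↔ e ∈ c.edges :=
    fun e => (c.rotate_edges x hx).mem_iff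
  have hy' : y ∈ (c.rotate x hx).support := by rwa [mem_support_rotate_iff]
  generalize c.rotate x hx = c' at hc' hee hy'
  have hQ := hc'.isPath_takeUntil hy'
  have hQe : ∀ e ∈ (c'.takeUntil y hy').edges, e ∈ c.edges :=
    fun e he => (hee e).1 ((isSubwalk_takeUntil c' hy').edges_subset he)
  generalize c'.takeUntil y hy' = q at hQ hQe
  have hne : p ≠ q := by
    rintro rfl
    have : p.edges = [] := List.eq_nil_iff_forall_not_mem.2 fun e he => hPe e he (hQe e he)
    rw [edges_eq_nil] at this
    exact hxy this.eq
  obtain ⟨a, b, p', q', hp', hq', hcyc⟩ := hP'.exists_isCycle_of_ne hQ hne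
  by_cases hne' : q'.edges = []
  · rw [edges_eq_nil] at hne'
    have hab : a = b := hne'.eq
    subst hab
    rw [hne'.eq_nil] at hcyc
    rw [reverse_nil, append_nil] at hcyc
    obtain ⟨ra, rb, h⟩ := hp'
    rw [h] at hP'
    have h1 := (hP'.of_append_left).of_append_right
    rw [isPath_iff_nil] at h1
    exact hcyc.not_nil h1
  · obtain ⟨e, he⟩ := List.exists_mem_of_ne_nil _ hne'
    have h1 := IsCactus.edges_iff hG hcyc hc (e := e) (by simp [he])
      (hQe e (hq'.edges_subset he))
    have h2 : p'.edges = [] := List.eq_nil_iff_forall_not_mem.2 fun e he =>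
      hPe e (hp'.edges_subset he) ((h1 e).1 (by simp [he]))
    rw [edges_eq_nil] at h2
    have hab : a = b := h2.eq
    subst hab
    rw [h2.eq_nil, nil_append] at hcyc
    obtain ⟨ra, rb, h⟩ := hq'
    rw [h] at hQ
    have h1 := (hQ.of_append_left).of_append_right.reverse
    rw [isPath_iff_nil] at h1
    exact hcyc.not_nil h1

/-- The vertex set of a cycle of a cactus is gated; edges outside the cycle do not change the
entry point. -/
lemma cycle_gate (hG : IsCactus G) {u : V} {c : G.Walk u u} (hc : c.IsCycle) :
    ∃ r, Gate G {v | v ∈ c.support} r ∧ ∀ x y, G.Adj x y → r x = r y ∨ s(x, y) ∈ c.edges := by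
  have hex : ∀ v, ∃ x ∈ c.support, (G.deleteEdges {e | e ∈ c.edges}).Reachable v x := by
    intro v
    obtain ⟨p⟩ := hG.1 v u
    induction p with
    | nil => exact ⟨_, c.start_mem_support, Reachable.refl _⟩
    | @cons v w z hadj p ih =>
      by_cases he : s(v, w) ∈ c.edges
      · exact ⟨v, c.fst_mem_support_of_mem_edges he, Reachable.refl _⟩
      · obtain ⟨x, hx, hr⟩ := ih hc
        refine ⟨x, hx, Reachable.trans (Adj.reachable ?_) hr⟩
        rw [deleteEdges_adj]
        exact ⟨hadj, he⟩
  choose r hr1 hr2 using hex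
  have hstep : ∀ x y, G.Adj x y → r x = r y ∨ s(x, y) ∈ c.edges := by
    intro x y hadj
    by_cases he : s(x, y) ∈ c.edges
    · exact Or.inr he
    · left
      refine cycle_separated hG hc (hr1 x) (hr1 y) (((hr2 x).symm.trans ?_).trans (hr2 y))
      refine Adj.reachable ?_
      rw [deleteEdges_adj]
      exact ⟨hadj, he⟩
  refine ⟨r, ⟨hr1, fun v hv => (cycle_separated hG hc hv (hr1 v) (hr2 v)).symm, ?_⟩, hstep⟩
  intro x y hadj
  exact (hstep x y hadj).imp_right fun h =>
    ⟨c.fst_mem_support_of_mem_edges h, c.snd_mem_support_of_mem_edges h⟩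

end CycleGate

/-! ### Squares -/

/-- The vertices `a, b, c, d` form a square, in this cyclic order. -/
structure Sq (G : SimpleGraph V) (a b c d : V) : Prop where
  ab : G.Adj a b
  bc : G.Adj b c
  cd : G.Adj c d
  da : G.Adj d a
  ac : a ≠ c
  bd : b ≠ d

/-- The edges of the square `a, b, c, d`. -/
def sqEdges (a b c d : V) : Set (Sym2 V) :=
  {e | e = s(a, b) ∨ e = s(b, c) ∨ e = s(c, d) ∨ e = s(d, a)}

/-- The map `r` sends each vertex to its entry point into the square `a, b, c, d`. -/
structure SqGate (G : SimpleGraph V) (a b c d : V) (r : V → V) : Prop where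
  mem : ∀ v, r v = a ∨ r v = b ∨ r v = c ∨ r v = d
  fa : r a = a
  fb : r b = b
  fc : r c = c
  fd : r d = d
  edge : ∀ x y, G.Adj x y → r x = r y ∨ s(x, y) ∈ sqEdges a b c d

namespace Sq

variable {G : SimpleGraph V} {a b c d : V}

lemma rot (h : Sq G a b c d) : Sq G b c d a := ⟨h.bc, h.cd, h.da, h.ab, h.bd, h.ac.symm⟩

lemma refl (h : Sq G a b c d) : Sq G c b a d :=
  ⟨h.bc.symm, h.ab.symm, h.da.symm, h.cd.symm, h.ac.symm, h.bd⟩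

/-- The closed walk around a square. -/
def walk (h : Sq G a b c d) : G.Walk a a :=
  Walk.cons h.ab (Walk.cons h.bc (Walk.cons h.cd (Walk.cons h.da Walk.nil)))

lemma isCycle (h : Sq G a b c d) : h.walk.IsCycle := by
  rw [walk, cons_isCycle_iff]
  simp [cons_isPath_iff, h.ab.ne, h.ab.ne.symm, h.bc.ne, h.cd.ne,
    h.da.ne, h.da.ne.symm, h.ac, h.ac.symm, h.bd]

lemma length_walk (h : Sq G a b c d) : h.walk.length = 4 := rfl

lemma mem_edges (h : Sq G a b c d) (e : Sym2 V) : e ∈ h.walk.edges ↔ e ∈ sqEdges a b c d := by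
  simp [walk, sqEdges]

lemma mem_support (h : Sq G a b c d) (v : V) :
    v ∈ h.walk.support ↔ v = a ∨ v = b ∨ v = c ∨ v = d := by
  simp only [walk, support_cons, support_nil, List.mem_cons, List.not_mem_nil, or_false]
  tauto

lemma exists_gate (h : Sq G a b c d) (hG : IsCactus G) : ∃ r, SqGate G a b c d r := by
  obtain ⟨r, h1, h2⟩ := cycle_gate hG h.isCycle
  refine ⟨r, fun v => (h.mem_support _).1 (h1.mem v), ?_, ?_, ?_, ?_,
    fun x y hadj => (h2 x y hadj).imp_right (h.mem_edges _).1⟩ <;>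
  exact h1.fix _ ((h.mem_support _).2 (by simp))

end Sq

lemma exists_sq_of_cycle_start {G : SimpleGraph V} {x : V} (c : G.Walk x x) (hc : c.IsCycle)
    (hl : c.length = 4) : ∃ b y d, Sq G x b y d ∧ (∀ e, e ∈ c.edges ↔ e ∈ sqEdges x b y d) ∧
      ∀ v, v ∈ c.support ↔ v = x ∨ v = b ∨ v = y ∨ v = d := by
  match c, hl with
  | .cons (v := b) h1 (.cons (v := y) h2 (.cons (v := d) h3 (.cons h4 .nil))), _ =>
    have hn := hc.support_nodup
    simp only [support_cons, support_nil, List.tail_cons, List.nodup_cons, List.mem_cons,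
      List.not_mem_nil, or_false, not_or] at hn
    refine ⟨b, y, d, ⟨h1, h2, h3, h4, fun h => hn.2.1.2 h.symm, hn.1.2.1⟩, ?_, ?_⟩
    · simp [sqEdges]
    · simp only [support_cons, support_nil, List.mem_cons, List.not_mem_nil, or_false]
      tauto

/-- A cycle of length four is a square, which can be read from any of its vertices. -/
lemma exists_sq_of_cycle {G : SimpleGraph V} {u : V} {c : G.Walk u u} (hc : c.IsCycle)
    (hl : c.length = 4) {x : V} (hx : x ∈ c.support) :
    ∃ b y d, Sq G x b y d ∧ (∀ e, e ∈ c.edges ↔ e ∈ sqEdges x b y d) ∧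
      ∀ v, v ∈ c.support ↔ v = x ∨ v = b ∨ v = y ∨ v = d := by
  classical
  obtain ⟨b, y, d, h1, h2, h3⟩ := exists_sq_of_cycle_start (c.rotate x hx) (hc.rotate hx)
    (by rw [length_rotate, hl])
  refine ⟨b, y, d, h1, fun e => ?_, fun v => ?_⟩
  · rw [← h2, (c.rotate_edges x hx).mem_iff]
  · rw [← h3, mem_support_rotate_iff]

namespace SqGate

variable {G : SimpleGraph V} {a b c d : V} {r : V → V}

lemma rot (h : SqGate G a b c d r) : SqGate G b c d a r :=
  ⟨fun v => by have := h.mem v; tauto, h.fb, h.fc, h.fd, h.fa, fun x y hadj =>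
    (h.edge x y hadj).imp_right fun h => by
      simp only [sqEdges, Set.mem_ofPred_eq] at h ⊢; tauto⟩

lemma refl (h : SqGate G a b c d r) : SqGate G c b a d r :=
  ⟨fun v => by have := h.mem v; tauto, h.fc, h.fb, h.fa, h.fd, fun x y hadj =>
    (h.edge x y hadj).imp_right fun h => by
      simp only [sqEdges, Set.mem_ofPred_eq] at h ⊢
      rw [Sym2.eq_swap (a := c) (b := b), Sym2.eq_swap (a := b) (b := a),
        Sym2.eq_swap (a := a) (b := d), Sym2.eq_swap (a := d) (b := c)]
      tauto⟩

lemma gate (h : SqGate G a b c d r) : Gate G {v | v = a ∨ v = b ∨ v = c ∨ v = d} r where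
  mem := h.mem
  fix v hv := by
    rcases hv with rfl | rfl | rfl | rfl
    exacts [h.fa, h.fb, h.fc, h.fd]
  step x y hadj := by
    rcases h.edge x y hadj with h1 | h1
    · exact Or.inl h1
    · right
      simp only [sqEdges, Set.mem_ofPred_eq, Sym2.eq_iff] at h1 ⊢
      tauto

/-- A neighbour of `a` outside the square enters the square at `a`. -/
lemma adj_a (h : SqGate G a b c d r) (hs : Sq G a b c d) {n : V} (hn : G.Adj a n) (hb : n ≠ b)
    (hd : n ≠ d) : r n = a := by
  rcases h.edge a n hn with h1 | h1
  · rw [← h1, h.fa]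
  · simp only [sqEdges, Set.mem_ofPred_eq, Sym2.eq_iff] at h1
    have := hs.ab.ne
    have := hs.da.ne
    have := hs.ac
    tauto

lemma not_adj (h : SqGate G a b c d r) (hs : Sq G a b c d) : ¬ G.Adj a c := by
  intro hadj
  have := h.adj_a hs hadj hs.bc.ne.symm hs.cd.ne
  rw [h.fc] at this
  exact hs.ac this.symm

lemma numGeodesics_ac (h : SqGate G a b c d r) (hs : Sq G a b c d) : numGeodesics G a c = 2 := by
  rw [numGeodesics_eq, Set.ncard_eq_two]
  have hd : G.dist a c = 2 := by
    refine le_antisymm (dist_le (Walk.cons hs.ab hs.bc.toWalk)) ?_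
    exact (Walk.cons hs.ab hs.bc.toWalk).reachable.one_lt_dist_of_ne_of_not_adj hs.ac
      (h.not_adj hs)
  refine ⟨Walk.cons hs.ab hs.bc.toWalk, Walk.cons hs.da.symm hs.cd.symm.toWalk, ?_, ?_⟩
  · intro heq
    have := congrArg Walk.support heq
    simp at this
    exact hs.bd this
  · ext p
    simp only [geodesics, hd, Set.mem_ofPred_eq, Set.mem_insert_iff, Set.mem_singleton_iff]
    constructor
    · intro hl
      have hp := p.isPath_of_length_eq_dist (hl.trans hd.symm)
      have hc := h.gate.pathConvex a (by simp) c (by simp) p hp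
      match p, hl with
      | .cons (v := w) h1 (.cons h2 .nil), _ =>
        rcases hc w (by simp) with rfl | rfl | rfl | rfl
        · exact absurd rfl h1.ne
        · exact Or.inl rfl
        · exact absurd rfl h2.ne
        · exact Or.inr rfl
    · rintro (rfl | rfl) <;> rfl

/-- If some other vertex enters the square at `a`, then so does some neighbour of `a`. -/
lemma exists_adj (h : SqGate G a b c d r) (hG : G.Connected) {v : V} (hv : r v = a)
    (hva : v ≠ a) : ∃ n, G.Adj a n ∧ r n = a ∧ n ≠ a := by
  obtain ⟨p, hp⟩ := (hG a v).exists_isPath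
  have hc := (h.gate.fibre (i := a) (by simp)).pathConvex a h.fa v hv p hp
  cases p with
  | nil => exact absurd rfl hva
  | @cons _ n _ hadj p => exact ⟨n, hadj, hc n (by simp), hadj.ne.symm⟩

end SqGate

/-! ### Maximal cacti are antipodal -/

section Antipodal

variable [Fintype V] [DecidableEq V] {G : SimpleGraph V}

/-- The fibre of a gate map. -/
def fib (r : V → V) (i : V) : Finset V := Finset.univ.filter (fun v => r v = i)

@[simp] lemma mem_fib {r : V → V} {i v : V} : v ∈ fib r i ↔ r v = i := by simp [fib]

/-- The number of geodesics from a vertex `i` to the fibre over it. -/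
noncomputable def wt (G : SimpleGraph V) (r : V → V) (i : V) : ℕ :=
  ∑ v ∈ fib r i, numGeodesics G i v

lemma Gate.hang_fib {S : Set V} {r : V → V} (h : Gate G S r) (i : V) :
    Hang G ((fib r i).erase i) i := by
  refine ⟨by simp, fun u hu v hv hadj => ?_⟩
  simp only [Finset.mem_erase, mem_fib, not_and] at hu hv
  rcases h.step u v hadj with h1 | ⟨h1, -⟩
  · by_contra hvi
    exact hv hvi (h1 ▸ hu.2)
  · exact absurd ((h.fix u h1).symm.trans hu.2) hu.1

lemma Gate.sum_fib {S : Set V} {r : V → V} (h : Gate G S r) (hG : G.Connected) {i z : V}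
    (hz : z ∈ S) : ∑ v ∈ fib r i, numGeodesics G z v = numGeodesics G z i * wt G r i := by
  rw [wt, Finset.mul_sum]
  refine Finset.sum_congr rfl fun v hv => ?_
  have := h.numGeodesics_left hG v hz
  rwa [mem_fib.1 hv] at this

lemma sum_fib_erase {r : V → V} {i : V} (hi : r i = i) (f : V → ℕ) :
    ∑ v ∈ ((fib r i).erase i)ᶜ, f v + ∑ v ∈ fib r i, f v = ∑ v, f v + f i := by
  rw [← Finset.sum_add_sum_compl ((fib r i).erase i),
    ← Finset.add_sum_erase (fib r i) f (mem_fib.2 hi)]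
  ring

lemma notMem_fib_erase {r : V → V} {a x : V} (hx : r x = x) : x ∉ (fib r a).erase a := by
  simp only [Finset.mem_erase, mem_fib, not_and]
  intro h1 h2
  exact h1 (hx ▸ h2)

lemma two_le_wt {r : V → V} {i : V} (hG : G.Connected) (hi : r i = i)
    (h : ((fib r i).erase i).Nonempty) : 2 ≤ wt G r i := by
  rw [wt, ← Finset.add_sum_erase _ _ (mem_fib.2 hi), numGeodesics_self]
  have : 0 < ∑ v ∈ (fib r i).erase i, numGeodesics G i v :=
    Finset.sum_pos (fun u _ => numGeodesics_pos (hG i u)) h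
  omega

lemma nonempty_of_two_le_wt {r : V → V} {i : V} (hi : r i = i) (h : 2 ≤ wt G r i) :
    ((fib r i).erase i).Nonempty := by
  rw [wt, ← Finset.add_sum_erase _ _ (mem_fib.2 hi), numGeodesics_self] at h
  by_contra hne
  rw [Finset.not_nonempty_iff_eq_empty] at hne
  rw [hne] at h
  simp at h

namespace SqGate

variable {a b c d : V} {r : V → V}

lemma sum_univ (h : SqGate G a b c d r) (hs : Sq G a b c d) (f : V → ℕ) :
    ∑ v, f v = ∑ v ∈ fib r a, f v + ∑ v ∈ fib r b, f v + ∑ v ∈ fib r c, f v +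
      ∑ v ∈ fib r d, f v := by
  rw [← Finset.sum_fiberwise_of_maps_to (t := {a, b, c, d}) (g := r)
    (fun v _ => by simpa using h.mem v)]
  rw [Finset.sum_insert (by simp [hs.ab.ne, hs.ac, hs.da.ne.symm]),
    Finset.sum_insert (by simp [hs.bc.ne, hs.bd]), Finset.sum_pair hs.cd.ne]
  simp only [fib]
  ring

lemma sum_a (h : SqGate G a b c d r) (hs : Sq G a b c d) (hG : G.Connected) :
    ∑ v ∈ ((fib r a).erase a)ᶜ, numGeodesics G a v =
      1 + wt G r b + 2 * wt G r c + wt G r d := by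
  have h1 := sum_fib_erase h.fa (fun v => numGeodesics G a v)
  have h2 := h.sum_univ hs (fun v => numGeodesics G a v)
  have hb := h.gate.sum_fib hG (i := b) (z := a) (by simp)
  have hc := h.gate.sum_fib hG (i := c) (z := a) (by simp)
  have hd := h.gate.sum_fib hG (i := d) (z := a) (by simp)
  rw [numGeodesics_adj hs.ab] at hb
  rw [h.numGeodesics_ac hs] at hc
  rw [numGeodesics_adj hs.da.symm] at hd
  simp only [numGeodesics_self] at h1
  omega

lemma sum_b (h : SqGate G a b c d r) (hs : Sq G a b c d) (hG : G.Connected) :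
    ∑ v ∈ ((fib r a).erase a)ᶜ, numGeodesics G b v =
      1 + wt G r b + wt G r c + 2 * wt G r d := by
  have h1 := sum_fib_erase h.fa (fun v => numGeodesics G b v)
  have h2 := h.sum_univ hs (fun v => numGeodesics G b v)
  have hb := h.gate.sum_fib hG (i := b) (z := b) (by simp)
  have hc := h.gate.sum_fib hG (i := c) (z := b) (by simp)
  have hd := h.gate.sum_fib hG (i := d) (z := b) (by simp)
  rw [numGeodesics_self] at hb
  rw [numGeodesics_adj hs.bc] at hc
  rw [h.rot.numGeodesics_ac hs.rot] at hd
  simp only [numGeodesics_adj hs.ab.symm] at h1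
  omega

lemma wt_le (h : SqGate G a b c d r) (hs : Sq G a b c d) (hM : MaxCactus G)
    (hB : ((fib r a).erase a).Nonempty) : wt G r d ≤ wt G r c := by
  have h1 := hM.move_le (h.gate.hang_fib a) hB (notMem_fib_erase h.fb)
  rw [h.sum_a hs hM.1.1, h.sum_b hs hM.1.1] at h1
  omega

/-- If two adjacent vertices of a square of a maximal cactus are active, then all four are, and
the opposite two carry equal weights. -/
lemma four_active (h : SqGate G a b c d r) (hs : Sq G a b c d) (hM : MaxCactus G)
    (ha : ((fib r a).erase a).Nonempty) (hb : ((fib r b).erase b).Nonempty) :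
    ((fib r c).erase c).Nonempty ∧ ((fib r d).erase d).Nonempty ∧ wt G r c = wt G r d := by
  have h1 := h.wt_le hs hM ha
  have h2 := h.refl.rot.wt_le hs.refl.rot hM hb
  have h3 := h.rot.wt_le hs.rot hM hb
  have h4 := two_le_wt hM.1.1 h.fa ha
  exact ⟨nonempty_of_two_le_wt (G := G) h.fc (by omega), nonempty_of_two_le_wt (G := G) h.fd (by omega), by omega⟩

lemma nonempty_iff (h : SqGate G a b c d r) (hs : Sq G a b c d) (hG : G.Connected) :
    ((fib r a).erase a).Nonempty ↔ ∃ n, G.Adj a n ∧ n ≠ b ∧ n ≠ d := by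
  constructor
  · rintro ⟨v, hv⟩
    simp only [Finset.mem_erase, mem_fib] at hv
    obtain ⟨n, h1, h2, h3⟩ := h.exists_adj hG hv.2 hv.1
    refine ⟨n, h1, ?_, ?_⟩
    · rintro rfl; exact hs.ab.ne (h2.symm.trans h.fb)
    · rintro rfl; exact hs.da.ne (h.fd.symm.trans h2)
  · rintro ⟨n, h1, h2, h3⟩
    exact ⟨n, by simp [h.adj_a hs h1 h2 h3, h1.ne.symm]⟩

end SqGate

/-- In a square of a maximal cactus no two adjacent vertices are active: otherwise the part
hanging at `b` could be moved to `a` without loss, giving a maximal cactus in which `c` and `d`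
are active but `b` is not. -/
lemma MaxCactus.not_adjacent_active (hM : MaxCactus G) {a b c d : V} (hs : Sq G a b c d)
    (ha : ∃ n, G.Adj a n ∧ n ≠ b ∧ n ≠ d) (hb : ∃ n, G.Adj b n ∧ n ≠ c ∧ n ≠ a) : False := by
  obtain ⟨r, h⟩ := hs.exists_gate hM.1
  have ha' := (h.nonempty_iff hs hM.1.1).2 ha
  have hb' := (h.rot.nonempty_iff hs.rot hM.1.1).2 hb
  obtain ⟨hc', hd', hw⟩ := h.four_active hs hM ha' hb'
  obtain ⟨nc, hc1, hc2, hc3⟩ := (h.rot.rot.nonempty_iff hs.rot.rot hM.1.1).1 hc'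
  obtain ⟨nd, hd1, hd2, hd3⟩ := (h.rot.rot.rot.nonempty_iff hs.rot.rot.rot hM.1.1).1 hd'
  have hh := h.gate.hang_fib b
  have hna := notMem_fib_erase (a := b) h.fa
  have hnb := notMem_fib_erase (a := b) h.fb
  have hnc := notMem_fib_erase (a := b) h.fc
  have hnd := notMem_fib_erase (a := b) h.fd
  have e1 := h.refl.rot.sum_a hs.refl.rot hM.1.1
  have e2 := h.refl.rot.sum_b hs.refl.rot hM.1.1
  have hM' := hM.move_maximal hh hna (by rw [e1, e2]; omega)
  have hag := agree_rest hh hna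
  have hncB : nc ∉ (fib r b).erase b := by
    have := h.rot.rot.adj_a hs.rot.rot hc1 hc2 hc3
    simp [this, hs.bc.ne.symm]
  have hndB : nd ∉ (fib r b).erase b := by
    have := h.rot.rot.rot.adj_a hs.rot.rot.rot hd1 hd2 hd3
    simp [this, hs.bd.symm]
  have hs' : Sq (move G ((fib r b).erase b) b a) a b c d :=
    ⟨(hag.adj a hna b hnb).1 hs.ab, (hag.adj b hnb c hnc).1 hs.bc, (hag.adj c hnc d hnd).1 hs.cd,
      (hag.adj d hnd a hna).1 hs.da, hs.ac, hs.bd⟩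
  obtain ⟨r', h'⟩ := hs'.exists_gate hM'.1
  have hc'' := (h'.rot.rot.nonempty_iff hs'.rot.rot hM'.1.1).2
    ⟨nc, (hag.adj c hnc nc hncB).1 hc1, hc2, hc3⟩
  have hd'' := (h'.rot.rot.rot.nonempty_iff hs'.rot.rot.rot hM'.1.1).2
    ⟨nd, (hag.adj d hnd nd hndB).1 hd1, hd2, hd3⟩
  obtain ⟨-, hb'', -⟩ := h'.rot.rot.four_active hs'.rot.rot hM' hc'' hd''
  obtain ⟨n, hn1, hn2, hn3⟩ := (h'.rot.nonempty_iff hs'.rot hM'.1.1).1 hb''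
  rcases hn1 with hn | hn | hn | hn
  · exact hnb hn.1
  · refine hn.2.1 ?_
    simp [h.rot.adj_a hs.rot hn.2.2 hn2 hn3, hn.2.2.ne.symm]
  · exact hnb hn.1
  · exact hs.ab.ne hn.2.2.1.symm

end Antipodal

/-! ### Two squares at a vertex with a further neighbour -/

section TwoSquares

variable {G : SimpleGraph V}

lemma sqEdges_disjoint (hG : IsCactus G) {a b c d a' b' c' d' : V} (h1 : Sq G a b c d)
    (h2 : Sq G a' b' c' d') {e₀ : Sym2 V} (h3 : e₀ ∈ sqEdges a b c d)
    (h4 : e₀ ∉ sqEdges a' b' c' d') :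
    ∀ e ∈ sqEdges a b c d, e ∉ sqEdges a' b' c' d' := by
  intro e he he'
  rw [← h2.mem_edges] at h4 he'
  rw [← h1.mem_edges] at h3 he
  exact h4 ((IsCactus.edges_iff hG h1.isCycle h2.isCycle he he' e₀).1 h3)

lemma mem_of_mem_sqEdges {a b c d x y : V} (h : s(x, y) ∈ sqEdges a b c d) :
    x = a ∨ x = b ∨ x = c ∨ x = d := by
  simp only [sqEdges, Set.mem_ofPred_eq, Sym2.eq_iff] at h
  tauto

lemma SqGate.fix {a b c d : V} {r : V → V} (h : SqGate G a b c d r) {x y : V}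
    (hx : s(x, y) ∈ sqEdges a b c d) : r x = x :=
  h.gate.fix x (mem_of_mem_sqEdges hx)

/-- A square edge-disjoint from the gated one enters it at a single vertex. -/
lemma SqGate.const {a b c d u p q s : V} {r : V → V} (h : SqGate G a b c d r)
    (hs : Sq G u p q s) (hd : ∀ e ∈ sqEdges u p q s, e ∉ sqEdges a b c d) :
    r p = r u ∧ r q = r u ∧ r s = r u := by
  have h1 := (h.edge _ _ hs.ab).resolve_right (hd _ (by simp [sqEdges]))
  have h2 := (h.edge _ _ hs.bc).resolve_right (hd _ (by simp [sqEdges]))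
  have h3 := (h.edge _ _ hs.da).resolve_right (hd _ (by simp [sqEdges]))
  exact ⟨h1.symm, h2.symm.trans h1.symm, h3⟩

/-- Of two edge-disjoint squares at `u`, everything entering the second one away from `u`
enters the first one at `u`. -/
lemma SqGate.eq_of_ne {u a z b c y d : V} {r₁ r₂ : V → V} (h₁ : SqGate G u a z b r₁)
    (h₂ : SqGate G u c y d r₂) (hs₁ : Sq G u a z b) (hs₂ : Sq G u c y d)
    (h12 : ∀ e ∈ sqEdges u a z b, e ∉ sqEdges u c y d)
    (h21 : ∀ e ∈ sqEdges u c y d, e ∉ sqEdges u a z b) (hG : G.Connected) {w : V}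
    (hw : r₂ w ≠ u) : r₁ w = u := by
  obtain ⟨ha, hz, hb⟩ := h₂.const hs₁ h12
  obtain ⟨hc, hy, hd⟩ := h₁.const hs₂ h21
  rw [h₂.fa] at ha hz hb
  rw [h₁.fa] at hc hy hd
  have hi : r₁ (r₂ w) = u := by
    rcases h₂.mem w with h | h | h | h
    · exact absurd h hw
    all_goals rw [h]; assumption
  obtain ⟨p, hp⟩ := (hG w (r₂ w)).exists_isPath
  have hconv := (h₂.gate.fibre (h₂.mem w)).pathConvex w rfl (r₂ w)
    (h₂.gate.fix _ (h₂.mem w)) p hp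
  generalize r₂ w = i at hw hi p hconv
  clear hp
  induction p with
  | nil => exact hi
  | @cons w w' i hadj p ih =>
    rw [← ih hw hi fun x hx => hconv x (by simp [hx])]
    refine (h₁.edge _ _ hadj).resolve_right fun he => ?_
    have h3 : r₂ w = i := hconv w (by simp)
    rcases mem_of_mem_sqEdges he with rfl | rfl | rfl | rfl
    · exact hw (h3.symm.trans h₂.fa)
    · exact hw (h3.symm.trans ha)
    · exact hw (h3.symm.trans hz)
    · exact hw (h3.symm.trans hb)

variable [Fintype V] [DecidableEq V]

lemma two_squares_aux (hM : MaxCactus G) {u a z b c y d v : V} {r₁ r₂ : V → V}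
    (h₁ : SqGate G u a z b r₁) (h₂ : SqGate G u c y d r₂) (hs₁ : Sq G u a z b)
    (hs₂ : Sq G u c y d) (h12 : ∀ e ∈ sqEdges u a z b, e ∉ sqEdges u c y d)
    (h21 : ∀ e ∈ sqEdges u c y d, e ∉ sqEdges u a z b) (hv : v ≠ u) (hv1 : r₁ v = u)
    (hv2 : r₂ v = u) : 2 * wt G r₂ y ≤ wt G r₁ z := by
  have hG := hM.1.1
  set B : Finset V := Finset.univ.filter (fun w => w ≠ u ∧ r₁ w = u ∧ r₂ w = u) with hB
  have hmem : ∀ w, w ∈ B ↔ w ≠ u ∧ r₁ w = u ∧ r₂ w = u := fun w => by simp [hB]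
  have hhang : Hang G B u := by
    refine ⟨by simp [hmem], fun x hx w hw hadj => ?_⟩
    rw [hmem] at hx hw
    have e1 := (h₁.edge x w hadj).resolve_right fun he => hx.1 ((h₁.fix he).symm.trans hx.2.1)
    have e2 := (h₂.edge x w hadj).resolve_right fun he => hx.1 ((h₂.fix he).symm.trans hx.2.2)
    by_contra hne
    exact hw ⟨hne, e1.symm.trans hx.2.1, e2.symm.trans hx.2.2⟩
  have hzB : z ∉ B := by
    rw [hmem, h₁.fc]
    exact fun h => h.1 h.2.1
  have hmove := hM.move_le hhang ⟨v, (hmem v).2 ⟨hv, hv1, hv2⟩⟩ hzB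
  have sz := h₁.sum_univ hs₁ (fun w => numGeodesics G z w)
  have su := h₁.sum_univ hs₁ (fun w => numGeodesics G u w)
  rw [← Finset.sum_add_sum_compl B] at sz su
  have hzu : numGeodesics G z u = 2 := by rw [numGeodesics_comm, h₁.numGeodesics_ac hs₁]
  have eB : ∑ w ∈ B, numGeodesics G z w = 2 * ∑ w ∈ B, numGeodesics G u w := by
    rw [Finset.mul_sum]
    refine Finset.sum_congr rfl fun w hw => ?_
    have := h₁.gate.numGeodesics_left hG w (u := z) (by simp)
    rw [((hmem w).1 hw).2.1, hzu] at this
    exact this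
  have g := fun (i x : V) hx => h₁.gate.sum_fib hG (i := i) (z := x) hx
  rw [eB, g u z (by simp), g a z (by simp), g z z (by simp), g b z (by simp), hzu,
    numGeodesics_adj hs₁.bc.symm, numGeodesics_adj hs₁.cd, numGeodesics_self] at sz
  rw [g u u (by simp), g a u (by simp), g z u (by simp), g b u (by simp),
    numGeodesics_comm G u z, hzu,
    numGeodesics_adj hs₁.ab, numGeodesics_adj hs₁.da.symm, numGeodesics_self] at su
  have hsub : ∑ w ∈ B ∪ fib r₂ y, numGeodesics G u w ≤ wt G r₁ u := by
    refine Finset.sum_le_sum_of_subset fun w hw => ?_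
    rw [mem_fib]
    rcases Finset.mem_union.1 hw with hw | hw
    · exact ((hmem w).1 hw).2.1
    · rw [mem_fib] at hw
      exact h₁.eq_of_ne h₂ hs₁ hs₂ h12 h21 hG (by rw [hw]; exact hs₂.ac.symm)
  rw [Finset.sum_union, h₂.gate.sum_fib hG (by simp), h₂.numGeodesics_ac hs₂] at hsub
  · omega
  · rw [Finset.disjoint_left]
    intro w hw hw'
    rw [mem_fib] at hw'
    exact hs₂.ac (((hmem w).1 hw).2.2.symm.trans hw')

/-- In a maximal cactus, a vertex of two squares has no neighbours besides those in the squares: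
moving everything else at `u` to the opposite vertex of either square would otherwise give
contradictory inequalities between the weights of these opposite vertices. -/
lemma MaxCactus.no_two_squares (hM : MaxCactus G) {u a z b c y d v : V} (hs₁ : Sq G u a z b)
    (hs₂ : Sq G u c y d) (hac : a ≠ c) (had : a ≠ d) (hv : G.Adj u v) (hva : v ≠ a)
    (hvb : v ≠ b) (hvc : v ≠ c) (hvd : v ≠ d) : False := by
  have hne : s(u, a) ∉ sqEdges u c y d := by
    have := hs₁.ab.ne
    have := hs₂.ac
    have := hs₂.ab.ne
    have := hs₂.da.ne
    simp only [sqEdges, Set.mem_ofPred_eq, Sym2.eq_iff]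
    tauto
  have h12 := sqEdges_disjoint hM.1 hs₁ hs₂ (by simp [sqEdges]) hne
  have h21 : ∀ e ∈ sqEdges u c y d, e ∉ sqEdges u a z b := fun e he he' => h12 e he' he
  obtain ⟨r₁, h₁⟩ := hs₁.exists_gate hM.1
  obtain ⟨r₂, h₂⟩ := hs₂.exists_gate hM.1
  have hv1 := h₁.adj_a hs₁ hv hva hvb
  have hv2 := h₂.adj_a hs₂ hv hvc hvd
  have i1 := two_squares_aux hM h₁ h₂ hs₁ hs₂ h12 h21 hv.ne.symm hv1 hv2
  have i2 := two_squares_aux hM h₂ h₁ hs₂ hs₁ h21 h12 hv.ne.symm hv2 hv1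
  have i3 : 1 ≤ wt G r₁ z := by
    rw [wt, ← Finset.add_sum_erase _ _ (mem_fib.2 h₁.fc), numGeodesics_self]
    omega
  omega

end TwoSquares

/-! ### Two squared vertices in one unipath structure -/

section TwoSquared

variable {G : SimpleGraph V}

/-- Replacing one end of a non-square edge by the other does not change geodesic counts: the edge
is a bridge or lies in a triangle. -/
lemma numGeodesics_of_not_square (hG : IsCactus G) (hg : IsGirthRestricted G) {x y : V}
    (hadj : G.Adj x y) (hn : s(x, y) ∉ squareEdges G) (v : V) :
    numGeodesics G x v = numGeodesics G y v := by
  classical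
  by_cases hc : ∃ (u : V) (c : G.Walk u u), c.IsCycle ∧ s(x, y) ∈ c.edges
  · obtain ⟨u, c, hc, he⟩ := hc
    have hl : c.length = 3 := (hg u c hc).resolve_right fun h => hn ⟨u, c, hc, h, he⟩
    obtain ⟨r, hr, -⟩ := cycle_gate hG hc
    have htri : ∀ s ∈ c.support, ∀ t ∈ c.support, s = t ∨ G.Adj s t := by
      match c, hl with
      | .cons h1 (.cons h2 (.cons h3 .nil)), _ =>
        intro s hs t ht
        simp only [support_cons, support_nil, List.mem_cons, List.not_mem_nil, or_false] at hs ht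
        have := h1.symm
        have := h2.symm
        have := h3.symm
        grind
    have hone : ∀ s ∈ c.support, ∀ t ∈ c.support, numGeodesics G s t = 1 := by
      intro s hs t ht
      rcases htri s hs t ht with rfl | h
      · exact numGeodesics_self G s
      · exact numGeodesics_adj h
    have hx := c.fst_mem_support_of_mem_edges he
    have hy := c.snd_mem_support_of_mem_edges he
    rw [hr.numGeodesics_left hG.1 v hx, hr.numGeodesics_left hG.1 v hy,
      hone x hx _ (hr.mem v), hone y hy _ (hr.mem v)]
  · by_cases h1 : ∀ p : G.Walk x v, y ∈ p.support
    · rw [numGeodesics_mul hG.1 h1, numGeodesics_adj hadj, one_mul]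
    by_cases h2 : ∀ p : G.Walk y v, x ∈ p.support
    · rw [numGeodesics_mul hG.1 h2, numGeodesics_adj hadj.symm, one_mul]
    push Not at h1 h2
    obtain ⟨p, hp⟩ := h1
    obtain ⟨q, hq⟩ := h2
    exfalso
    apply hc
    refine ⟨y, Walk.cons hadj.symm (p.append q.reverse).bypass, ?_, by simp [Sym2.eq_swap]⟩
    rw [cons_isCycle_iff]
    refine ⟨bypass_isPath _, fun h => ?_⟩
    have := edges_bypass_subset_edges _ h
    rw [edges_append, edges_reverse, List.mem_append, List.mem_reverse] at this
    rcases this with h | h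
    · exact hp (p.fst_mem_support_of_mem_edges h)
    · exact hq (q.snd_mem_support_of_mem_edges h)

lemma Sq.mem_squareEdges {a b c d : V} (h : Sq G a b c d) {e : Sym2 V} (he : e ∈ sqEdges a b c d) :
    e ∈ squareEdges G :=
  ⟨a, h.walk, h.isCycle, h.length_walk, (h.mem_edges e).2 he⟩

/-- A non-trivial walk avoiding square edges provides a neighbour along a non-square edge. -/
lemma exists_adj_of_reachable {x y : V} (h : (G.deleteEdges (squareEdges G)).Reachable x y)
    (hxy : x ≠ y) : ∃ w, G.Adj x w ∧ s(x, w) ∉ squareEdges G ∧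
      (G.deleteEdges (squareEdges G)).Reachable x w := by
  obtain ⟨p⟩ := h
  cases p with
  | nil => exact absurd rfl hxy
  | @cons _ w _ hadj p =>
    have h1 := hadj
    rw [deleteEdges_adj] at h1
    exact ⟨w, h1.1, h1.2, hadj.reachable⟩

variable [Fintype V] [DecidableEq V]

/-- In a maximal cactus a unipath structure contains at most one squared vertex: otherwise one
of two squares could be slid, without loss, along it to the vertex carrying the other one. -/
lemma MaxCactus.no_two_squared (hM : MaxCactus G) (hg : IsGirthRestricted G) {x u : V}
    (hx : IsSquaredVertex G x) (hu : IsSquaredVertex G u) (hxu : x ≠ u)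
    (hr : (G.deleteEdges (squareEdges G)).Reachable x u) : False := by
  obtain ⟨_, c₁, hc₁, hl₁, hx⟩ := hx
  obtain ⟨_, c₂, hc₂, hl₂, hu⟩ := hu
  obtain ⟨a, z, b, hs₁, -, -⟩ := exists_sq_of_cycle hc₁ hl₁ hx
  obtain ⟨c, y, d, hs₂, -, -⟩ := exists_sq_of_cycle hc₂ hl₂ hu
  obtain ⟨r, h⟩ := hs₂.exists_gate hM.1
  have hconst : ∀ w, (G.deleteEdges (squareEdges G)).Reachable x w → r x = r w ∧
      ∀ v, numGeodesics G x v = numGeodesics G w v := by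
    rintro w ⟨p⟩
    clear hx hs₁ hxu hr
    induction p with
    | nil => exact ⟨rfl, fun v => rfl⟩
    | cons hadj p ih =>
      rw [deleteEdges_adj] at hadj
      refine ⟨((h.edge _ _ hadj.1).resolve_right fun he =>
        hadj.2 (hs₂.mem_squareEdges he)).trans ih.1, fun v => ?_⟩
      rw [numGeodesics_of_not_square hM.1 hg hadj.1 hadj.2, ih.2]
  have hrx : r x = u := (hconst u hr).1.trans h.fa
  set B : Finset V := Finset.univ.filter (fun w => r w ≠ u) with hB
  have hmem : ∀ w, w ∈ B ↔ r w ≠ u := fun w => by simp [hB]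
  have hhang : Hang G B u := by
    refine ⟨by simp [hmem, h.fa], fun p hp q hq hadj => ?_⟩
    rw [hmem] at hp hq
    push Not at hq
    rcases h.edge q p hadj.symm with he | he
    · exact absurd (he.symm.trans hq) hp
    · exact (h.fix he).symm.trans hq
  have hxB : x ∉ B := by simp [hmem, hrx]
  have hM' := hM.move_maximal hhang hxB
    (Finset.sum_congr rfl fun v _ => (hconst u hr).2 v)
  have hag := agree_rest hhang hxB
  -- the edges of the square at `x` are not edges of the square at `u`
  have hdis : ∀ e ∈ sqEdges x a z b, e ∉ sqEdges u c y d := by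
    refine sqEdges_disjoint hM.1 hs₁ hs₂ (e₀ := s(x, a)) (by simp [sqEdges]) fun he => ?_
    exact hxu ((h.fix he).symm.trans hrx)
  obtain ⟨ha, hz, hb⟩ := h.const hs₁ hdis
  rw [hrx] at ha hz hb
  have haB : a ∉ B := by simp [hmem, ha]
  have hzB : z ∉ B := by simp [hmem, hz]
  have hbB : b ∉ B := by simp [hmem, hb]
  have hcB : c ∈ B := by simp [hmem, h.fb, hs₂.ab.ne.symm]
  have hyB : y ∈ B := by simp [hmem, h.fc, hs₂.ac.symm]
  have hdB : d ∈ B := by simp [hmem, h.fd, hs₂.da.ne]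
  have ht₁ : Sq (move G B u x) x a z b :=
    ⟨(hag.adj x hxB a haB).1 hs₁.ab, (hag.adj a haB z hzB).1 hs₁.bc, (hag.adj z hzB b hbB).1 hs₁.cd,
      (hag.adj b hbB x hxB).1 hs₁.da, hs₁.ac, hs₁.bd⟩
  have ht₂ : Sq (move G B u x) x c y d :=
    ⟨Or.inr (Or.inr (Or.inr ⟨hcB, hxB, rfl, hs₂.ab.symm⟩)), Or.inl ⟨hcB, hyB, hs₂.bc⟩,
      Or.inl ⟨hyB, hdB, hs₂.cd⟩, Or.inr (Or.inr (Or.inl ⟨hdB, hxB, rfl, hs₂.da⟩)),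
      fun h => hxB (h ▸ hyB), hs₂.bd⟩
  obtain ⟨w, hw1, hw2, hw3⟩ := exists_adj_of_reachable hr hxu
  have hwB : w ∉ B := by simp [hmem, ← (hconst w hw3).1, hrx]
  refine hM'.no_two_squares ht₁ ht₂ (v := w) ?_ ?_ ((hag.adj x hxB w hwB).1 hw1) ?_ ?_ ?_ ?_
  · exact fun h => haB (h ▸ hcB)
  · exact fun h => haB (h ▸ hdB)
  · rintro rfl
    exact hw2 (hs₁.mem_squareEdges (by simp [sqEdges]))
  · rintro rfl
    exact hw2 (hs₁.mem_squareEdges (by simp [sqEdges, Sym2.eq_swap]))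
  · exact fun h => hwB (h ▸ hcB)
  · exact fun h => hwB (h ▸ hdB)

end TwoSquared

/-! ### Geodesics between two vertices of a cycle -/

section Arcs

variable {G : SimpleGraph V}

lemma exists_eq_append_of_edges_subset {u v w : V} (p : G.Walk u v) (q : G.Walk u w)
    (hp : p.IsPath) (hq : q.IsPath) (h : p.edges ⊆ q.edges) : ∃ q₂, q = p.append q₂ := by
  induction p with
  | nil => exact ⟨q, rfl⟩
  | @cons u x v hadj p ih =>
    cases q with
    | nil => simp at h
    | @cons _ x' _ hadj' q =>
      rw [cons_isPath_iff] at hp hq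
      have hw : x = x' := by
        have h1 : s(u, x) ∈ (Walk.cons hadj' q).edges := h (by simp)
        rw [edges_cons, List.mem_cons] at h1
        rcases h1 with h1 | h1
        · exact Sym2.congr_right.1 h1
        · exact absurd (q.fst_mem_support_of_mem_edges h1) hq.2
      subst hw
      obtain ⟨q₂, hq₂⟩ := ih q hp.1 hq.1 fun e he => by
        have h1 : e ∈ (Walk.cons hadj' q).edges := h (by simp [he])
        rw [edges_cons, List.mem_cons] at h1
        rcases h1 with rfl | h1
        · exact absurd (p.fst_mem_support_of_mem_edges he) hp.2
        · exact h1
      exact ⟨q₂, by rw [cons_append, ← hq₂]⟩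

/-- A path along a cycle which does not use the first edge of the cycle follows the reversed
cycle. -/
lemma reverse_eq_append {x y : V} {c : G.Walk x x} (hc : c.IsCycle) (p : G.Walk x y)
    (hp : p.IsPath) (h : p.edges ⊆ c.edges) (he : s(x, c.getVert 1) ∉ p.edges) :
    ∃ q, c.reverse = p.append q := by
  cases c with
  | nil => exact absurd hc (by simp)
  | @cons _ w _ hadj c =>
    rw [cons_isCycle_iff] at hc
    have he' : s(x, w) ∉ p.edges := by simpa using he
    obtain ⟨q, hq⟩ := exists_eq_append_of_edges_subset p c.reverse hp hc.1.reverse (by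
      intro e h1
      have := h h1
      rw [edges_cons, List.mem_cons] at this
      rcases this with rfl | h2
      · exact absurd h1 he'
      · simpa using h2)
    exact ⟨q.append (Walk.cons hadj.symm Walk.nil), by
      rw [reverse_cons, hq, append_assoc]⟩

lemma eq_append_or {x y : V} {c : G.Walk x x} (hc : c.IsCycle) (p : G.Walk x y)
    (hp : p.IsPath) (h : p.edges ⊆ c.edges) :
    (∃ q, c = p.append q) ∨ ∃ q, c.reverse = p.append q := by
  by_cases h1 : s(x, c.getVert 1) ∈ p.edges
  · left
    have h2 := reverse_eq_append hc.reverse p hp (by simpa using h) (by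
      intro h2
      cases p with
      | nil => simp at h1
      | @cons _ w _ hadj p =>
        rw [cons_isPath_iff] at hp
        rw [edges_cons, List.mem_cons] at h1 h2
        have e1 := h1.resolve_right fun h => hp.2 (p.fst_mem_support_of_mem_edges h)
        have e2 := h2.resolve_right fun h => hp.2 (p.fst_mem_support_of_mem_edges h)
        have e3 := Sym2.congr_right.1 (e1.trans e2.symm)
        rw [getVert_reverse] at e3
        have hl := hc.three_le_length
        have := hc.getVert_injOn (by simp; omega) (by simp; omega) e3
        omega)
    simpa using h2
  · exact Or.inr (reverse_eq_append hc p hp h h1)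

lemma eq_of_append_eq {x y z : V} {p p' : G.Walk x y} {q q' : G.Walk y z}
    (h : p.append q = p'.append q') (hl : p.length = p'.length) : p = p' := by
  have h1 := congrArg Walk.support h
  rw [support_append, support_append] at h1
  exact ext_support (List.append_inj h1 (by rw [length_support, length_support, hl])).1

lemma getVert_of_eq_append {x y z : V} {c : G.Walk x z} {p : G.Walk x y} {q : G.Walk y z}
    (h : c = p.append q) : c.getVert p.length = y := by
  subst h
  rw [getVert_append]
  simp

/-- There are at most two geodesics between two vertices of a cycle of a cactus, and only one
unless the vertices are opposite. -/
lemma numGeodesics_cycle_start (hG : IsCactus G) {x : V} {c : G.Walk x x}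
    (hc : c.IsCycle) {k : ℕ} (hk0 : 0 < k) (hk : k < c.length) :
    numGeodesics G x (c.getVert k) ≤ 2 ∧
      (2 * k ≠ c.length → numGeodesics G x (c.getVert k) ≤ 1) := by
  classical
  obtain ⟨r, hr, hre⟩ := cycle_gate hG hc
  have hP : ∀ p ∈ geodesics G x (c.getVert k),
      (∃ q, c = p.append q) ∨ ∃ q, c.reverse = p.append q := by
    intro p hp
    have hp' := p.isPath_of_length_eq_dist hp
    refine eq_append_or hc p hp' fun e he => ?_
    induction e with | _ u v
    have hs := hr.pathConvex x c.start_mem_support _ (c.getVert_mem_support k) p hp'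
    have hu := hs _ (p.fst_mem_support_of_mem_edges he)
    have hv := hs _ (p.snd_mem_support_of_mem_edges he)
    have hadj := p.adj_of_mem_edges he
    refine (hre u v hadj).resolve_left fun h => hadj.ne ?_
    rwa [hr.fix u hu, hr.fix v hv] at h
  have h1 : ∀ p ∈ geodesics G x (c.getVert k), (∃ q, c = p.append q) → p.length = k := by
    rintro p hp ⟨q, hq⟩
    have h2 : c.getVert p.length = c.getVert k := getVert_of_eq_append hq
    have h3 := congrArg Walk.length hq
    rw [length_append] at h3
    have h4 : p.length ≠ 0 := fun h4 => by
      have := hc.getVert_injOn' (x₁ := 0) (x₂ := k) (by simp) (by simp; omega) (by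
        rw [h4] at h2; exact h2)
      omega
    exact hc.getVert_injOn (by simp; omega) (by simp; omega) h2
  have h2 : ∀ p ∈ geodesics G x (c.getVert k), (∃ q, c.reverse = p.append q) →
      p.length = c.length - k := by
    rintro p hp ⟨q, hq⟩
    have h2 : c.reverse.getVert p.length = c.getVert k := getVert_of_eq_append hq
    rw [getVert_reverse] at h2
    have h3 := congrArg Walk.length hq
    rw [length_append, length_reverse] at h3
    have h4 : p.length ≠ 0 := fun h4 => by
      have := hc.getVert_injOn' (x₁ := 0) (x₂ := k) (by simp) (by simp; omega) (by
        rw [← h2, h4]; simp)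
      omega
    by_cases h5 : p.length = c.length
    · rw [h5] at h2
      have := hc.getVert_injOn' (x₁ := 0) (x₂ := k) (by simp) (by simp; omega) (by
        rw [← h2]; simp)
      omega
    have := hc.getVert_injOn (by simp; omega) (by simp; omega) h2
    omega
  set A : Set (G.Walk x (c.getVert k)) :=
    {p | p ∈ geodesics G x (c.getVert k) ∧ ∃ q, c = p.append q} with hA
  set B : Set (G.Walk x (c.getVert k)) :=
    {p | p ∈ geodesics G x (c.getVert k) ∧ ∃ q, c.reverse = p.append q} with hB
  have hAB : geodesics G x (c.getVert k) = A ∪ B := by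
    ext p
    constructor
    · exact fun hp => (hP p hp).imp (fun h => ⟨hp, h⟩) fun h => ⟨hp, h⟩
    · rintro (h | h) <;> exact h.1
  have hA0 : A.Subsingleton := by
    rintro p ⟨hp, q, hq⟩ p' ⟨hp', q', hq'⟩
    exact eq_of_append_eq (hq.symm.trans hq') (hp.trans hp'.symm)
  have hB0 : B.Subsingleton := by
    rintro p ⟨hp, q, hq⟩ p' ⟨hp', q', hq'⟩
    exact eq_of_append_eq (hq.symm.trans hq') (hp.trans hp'.symm)
  have := hA0.finite.to_subtype
  have := hB0.finite.to_subtype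
  have hA1 := Set.ncard_le_one_iff_subsingleton.2 hA0
  have hB1 := Set.ncard_le_one_iff_subsingleton.2 hB0
  rw [numGeodesics_eq, hAB]
  refine ⟨(Set.ncard_union_le A B).trans (by omega), fun hne => ?_⟩
  have : A = ∅ ∨ B = ∅ := by
    by_contra! hcon
    obtain ⟨⟨p, hp, hp'⟩, ⟨q, hq, hq'⟩⟩ := hcon
    have e1 := h1 p hp hp'
    have e2 := h2 q hq hq'
    have e3 : p.length = q.length := hp.trans hq.symm
    omega
  rcases this with h | h
  · rwa [h, Set.empty_union]
  · rwa [h, Set.union_empty]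

lemma numGeodesics_cycle (hG : IsCactus G) {x : V} {c : G.Walk x x}
    (hc : c.IsCycle) {i j : ℕ} (hij : i < j) (hj : j < c.length) :
    numGeodesics G (c.getVert i) (c.getVert j) ≤ 2 ∧
      (2 * (j - i) ≠ c.length → numGeodesics G (c.getVert i) (c.getVert j) ≤ 1) := by
  classical
  have hi := c.getVert_mem_support i
  have hc' := hc.rotate hi
  have hlen : (c.rotate _ hi).length = c.length := length_rotate _ _ _
  have h1 : (c.takeUntil _ hi).length = i := by
    have h2 := c.length_takeUntil_le_length hi
    have h3 := getVert_length_takeUntil hi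
    by_cases h4 : (c.takeUntil _ hi).length = c.length
    · have := getVert_lt_length_takeUntil_ne (n := i) hi (by omega)
      exact absurd rfl this
    · exact hc.getVert_injOn' (by simp; omega) (by simp; omega) h3
  have h2 : (c.rotate _ hi).getVert (j - i) = c.getVert j := by
    have h3 := c.take_spec hi
    have h4 := congrArg Walk.length h3
    rw [length_append] at h4
    conv_rhs => rw [← h3]
    rw [rotate, getVert_append, getVert_append, h1, if_pos (by omega), if_neg (by omega)]
  have := numGeodesics_cycle_start hG hc' (k := j - i) (by omega) (by omega)
  rwa [h2, hlen] at this

end Arcs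

/-! ### Replacing the graph on a gated set -/

section Replace

variable {G G' : SimpleGraph V} {S : Set V} {r : V → V}

/-- If two graphs differ only on a common gated set, where the second one has at least as many
geodesics between any two vertices and more for some two, then it has more geodesics in total. -/
lemma total_lt [Fintype V] (h : Gate G S r) (h' : Gate G' S r) (hG : G.Connected)
    (hG' : G'.Connected) (hadj : ∀ u v, r u = r v → (G.Adj u v ↔ G'.Adj u v))
    (hle : ∀ u ∈ S, ∀ v ∈ S, numGeodesics G u v ≤ numGeodesics G' u v)
    {x y : V} (hlt : numGeodesics G x y < numGeodesics G' x y) :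
    total G < total G' := by
  have hag : ∀ i ∈ S, Agree G G' {v | r v = i} := fun i hi =>
    ⟨(h.fibre hi).pathConvex, (h'.fibre hi).pathConvex, fun u hu v hv =>
      hadj u v (Eq.trans hu (Eq.symm hv))⟩
  have key : ∀ u v, numGeodesics G u v ≤ numGeodesics G' u v := by
    intro u v
    by_cases huv : r u = r v
    · exact ((hag _ (h.mem v)).numGeodesics hG hG' huv rfl).ge
    · rw [h.numGeodesics_of_ne hG huv, h'.numGeodesics_of_ne hG' huv,
        (hag _ (h.mem u)).numGeodesics hG hG' rfl (h.fix _ (h.mem u)),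
        (hag _ (h.mem v)).numGeodesics hG hG' (h.fix _ (h.mem v)) rfl]
      exact Nat.mul_le_mul_right _ (Nat.mul_le_mul_left _ (hle _ (h.mem u) _ (h.mem v)))
  refine Finset.sum_lt_sum (fun u _ => Finset.sum_le_sum fun v _ => key u v)
    ⟨x, Finset.mem_univ x, ?_⟩
  exact Finset.sum_lt_sum (fun v _ => key x v) ⟨y, Finset.mem_univ y, hlt⟩

lemma ncard_edgeSet_eq [Finite V] (hadj : ∀ u v, r u = r v → (G.Adj u v ↔ G'.Adj u v))
    (he : {e ∈ G.edgeSet | ¬ (e.map r).IsDiag}.ncard =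
      {e ∈ G'.edgeSet | ¬ (e.map r).IsDiag}.ncard) :
    G.edgeSet.ncard = G'.edgeSet.ncard := by
  have h1 : ∀ H : SimpleGraph V, H.edgeSet.ncard =
      {e ∈ H.edgeSet | (e.map r).IsDiag}.ncard + {e ∈ H.edgeSet | ¬ (e.map r).IsDiag}.ncard := by
    intro H
    rw [← Set.ncard_union_eq]
    · congr 1
      ext e
      simp only [Set.mem_union, Set.mem_ofPred_eq]
      tauto
    · rw [Set.disjoint_left]
      exact fun e h1 h2 => h2.2 h1.2
  have h2 : {e ∈ G.edgeSet | (e.map r).IsDiag} = {e ∈ G'.edgeSet | (e.map r).IsDiag} := by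
    ext e
    induction e with | _ u v
    simp only [Set.mem_ofPred_eq, SimpleGraph.mem_edgeSet, Sym2.map_mk, Sym2.mk_isDiag_iff]
    exact ⟨fun h => ⟨(hadj u v h.2).1 h.1, h.2⟩, fun h => ⟨(hadj u v h.2).2 h.1, h.2⟩⟩
  rw [h1 G, h1 G', h2, he]

end Replace

/-! ### A square with stars at two opposite vertices -/

/-- The ordered edges of the graph formed by the square `a, p, b, q` with the other vertices of
`A` hung at `p` and the other vertices of `B` hung at `q`, listed from `p` and from `q`. -/
def StarRel (A B : Set V) (a b p q x y : V) : Prop :=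
  (x = p ∧ y ≠ p ∧ (y ∈ A ∨ y = a ∨ y = b)) ∨ (x = q ∧ y ≠ q ∧ (y ∈ B ∨ y = a ∨ y = b))

lemma starRel_swap {A B : Set V} {a b p q x y : V} :
    StarRel B A a b q p x y ↔ StarRel A B a b p q x y := or_comm

lemma starRel_swap' {A B : Set V} {a b p q x y : V} :
    StarRel A B b a p q x y ↔ StarRel A B a b p q x y := by
  unfold StarRel
  rw [or_comm (a := y = b)]

/-- On the convex set `A ∪ B ∪ {a, b}` the graph `H` is the square `a, p, b, q` with the other
vertices of `A` hung at `p` and the other vertices of `B` hung at `q`. -/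
structure Star (H : SimpleGraph V) (A B : Set V) (a b p q : V) : Prop where
  pA : p ∈ A
  qB : q ∈ B
  disj : ∀ x ∈ A, x ∉ B
  aA : a ∉ A
  aB : a ∉ B
  bA : b ∉ A
  bB : b ∉ B
  ab : a ≠ b
  adj : ∀ x y, (x ∈ A ∨ x ∈ B ∨ x = a ∨ x = b) → (y ∈ A ∨ y ∈ B ∨ y = a ∨ y = b) →
    (H.Adj x y ↔ StarRel A B a b p q x y ∨ StarRel A B a b p q y x)
  conv : PathConvex H {x | x ∈ A ∨ x ∈ B ∨ x = a ∨ x = b}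

namespace Star

variable {H : SimpleGraph V} {A B : Set V} {a b p q : V}

lemma swap (h : Star H A B a b p q) : Star H B A a b q p where
  pA := h.qB
  qB := h.pA
  disj x hx hx' := h.disj x hx' hx
  aA := h.aB
  aB := h.aA
  bA := h.bB
  bB := h.bA
  ab := h.ab
  adj x y hx hy := by
    rw [starRel_swap (x := x), starRel_swap (x := y)]
    exact h.adj x y (or_left_comm.1 hx) (or_left_comm.1 hy)
  conv := by
    have h1 : {x | x ∈ B ∨ x ∈ A ∨ x = a ∨ x = b} = {x | x ∈ A ∨ x ∈ B ∨ x = a ∨ x = b} :=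
      Set.ext fun x => or_left_comm
    rw [h1]
    exact h.conv

lemma swap' (h : Star H A B a b p q) : Star H A B b a p q where
  pA := h.pA
  qB := h.qB
  disj := h.disj
  aA := h.bA
  aB := h.bB
  bA := h.aA
  bB := h.aB
  ab := h.ab.symm
  adj x y hx hy := by
    rw [starRel_swap' (x := x), starRel_swap' (x := y)]
    rw [or_comm (a := x = b)] at hx
    rw [or_comm (a := y = b)] at hy
    exact h.adj x y hx hy
  conv := by
    have h1 : {x | x ∈ A ∨ x ∈ B ∨ x = b ∨ x = a} = {x | x ∈ A ∨ x ∈ B ∨ x = a ∨ x = b} :=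
      Set.ext fun x => by
        simp only [Set.mem_ofPred_eq]
        rw [or_comm (a := x = b)]
    rw [h1]
    exact h.conv

lemma eq_p (h : Star H A B a b p q) {n y : V} (hn : n ∈ A) (hnp : n ≠ p)
    (hy : y ∈ A ∨ y ∈ B ∨ y = a ∨ y = b) (hadj : H.Adj n y) : y = p := by
  have h1 := h.disj n hn
  have h2 : n ≠ a := by rintro rfl; exact h.aA hn
  have h3 : n ≠ b := by rintro rfl; exact h.bA hn
  have h4 : n ≠ q := by rintro rfl; exact h1 h.qB
  rw [h.adj n y (Or.inl hn) hy] at hadj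
  unfold StarRel at hadj
  tauto

lemma eq_p_or (h : Star H A B a b p q) {y : V}
    (hy : y ∈ A ∨ y ∈ B ∨ y = a ∨ y = b) (hadj : H.Adj a y) : y = p ∨ y = q := by
  have h2 : a ≠ p := by rintro rfl; exact h.aA h.pA
  have h3 : a ≠ q := by rintro rfl; exact h.aB h.qB
  rw [h.adj a y (by simp) hy] at hadj
  unfold StarRel at hadj
  tauto

lemma mem_of_adj_p (h : Star H A B a b p q) {y : V}
    (hy : y ∈ A ∨ y ∈ B ∨ y = a ∨ y = b) (hadj : H.Adj p y) : y ∈ A ∨ y = a ∨ y = b := by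
  have h1 := h.pA
  have h2 : p ≠ a := by rintro rfl; exact h.aA h.pA
  have h3 : p ≠ b := by rintro rfl; exact h.bA h.pA
  have h4 := h.disj p h1
  have h5 : p ≠ q := by rintro rfl; exact h4 h.qB
  rw [h.adj p y (Or.inl h.pA) hy] at hadj
  unfold StarRel at hadj
  tauto

lemma no_detour (h : Star H A B a b p q) {n : V} (hn : n ∈ A) (hnp : n ≠ p) (π : H.Walk n p)
    (hπ : π.IsPath) : s(n, p) ∈ π.edges := by
  have hc := h.conv n (Or.inl hn) p (Or.inl h.pA) π hπ
  cases π with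
  | nil => exact absurd rfl hnp
  | @cons _ z _ hadj π =>
    obtain rfl := h.eq_p hn hnp (hc z (by simp)) hadj
    simp

/-- The only detour of the edge `ap` goes around the square. -/
lemma detour (h : Star H A B a b p q) (π : H.Walk a p) (hπ : π.IsPath)
    (he : s(a, p) ∉ π.edges) : π.support = [a, q, b, p] := by
  have hap : a ≠ p := by rintro rfl; exact h.aA h.pA
  have hpq : p ≠ q := by rintro rfl; exact h.disj p h.pA h.qB
  have hbp : b ≠ p := by rintro rfl; exact h.bA h.pA
  have hc := h.conv a (by simp) p (Or.inl h.pA) π hπ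
  cases π with
  | nil => exact absurd rfl hap
  | @cons _ z _ h1 π =>
    rcases h.eq_p_or (hc z (by simp)) h1 with rfl | rfl
    · simp at he
    rw [cons_isPath_iff] at hπ
    cases π with
    | nil => exact absurd rfl hpq
    | @cons _ w _ h2 π =>
      have hwa : w ≠ a := by
        rintro rfl
        exact hπ.2 (by simp)
      rw [cons_isPath_iff] at hπ
      have hwB := h.swap.mem_of_adj_p (by have := hc w (by simp); simp at this; tauto) h2
      cases π with
      | nil => exact absurd hwB (by have := h.disj _ h.pA; tauto)
      | @cons _ y _ h3 π =>
        have hyX := hc y (by simp)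
        have hyq : y ≠ z := by
          rintro rfl
          exact hπ.1.2 (by simp)
        rcases hwB with hwB | rfl | rfl
        · exact absurd (h.swap.eq_p hwB h2.ne.symm (by simp at hyX; tauto) h3) hyq
        · exact absurd rfl hwa
        · have := (h.swap'.eq_p_or (by simp at hyX; tauto) h3).resolve_right hyq
          subst this
          have h4 := hπ.1.1
          rw [cons_isPath_iff, isPath_iff_nil] at h4
          rw [h4.1.eq_nil]
          simp

lemma uniqueDetour (h : Star H A B a b p q) :
    UniqueDetour H {x | x ∈ A ∨ x ∈ B ∨ x = a ∨ x = b} := by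
  -- by symmetry the edge may be assumed to start at `p` or at `q`
  have key : ∀ u v, StarRel A B a b p q v u → ∀ π π' : H.Walk u v, π.IsPath → π'.IsPath →
      s(u, v) ∉ π.edges → s(u, v) ∉ π'.edges → π = π' := by
    rintro u v (⟨rfl, hne, hu | rfl | rfl⟩ | ⟨rfl, hne, hu | rfl | rfl⟩) π π' hπ hπ' he he'
    · exact absurd (h.no_detour hu hne π hπ) he
    · exact ext_support ((h.detour π hπ he).trans (h.detour π' hπ' he').symm)
    · exact ext_support ((h.swap'.detour π hπ he).trans (h.swap'.detour π' hπ' he').symm)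
    · exact absurd (h.swap.no_detour hu hne π hπ) he
    · exact ext_support ((h.swap.detour π hπ he).trans (h.swap.detour π' hπ' he').symm)
    · exact ext_support ((h.swap.swap'.detour π hπ he).trans
        (h.swap.swap'.detour π' hπ' he').symm)
  intro u hu v hv hadj π π' hπ hπ' he he'
  rcases (h.adj u v hu hv).1 hadj with h1 | h1
  · have := key v u h1 π.reverse π'.reverse hπ.reverse hπ'.reverse
      (by rw [Sym2.eq_swap]; simpa using he) (by rw [Sym2.eq_swap]; simpa using he')
    rw [← π.reverse_reverse, this, reverse_reverse]
  · exact key u v h1 π π' hπ hπ' he he'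

lemma adj_a (h : Star H A B a b p q) : H.Adj a p := by
  rw [h.adj a p (by simp) (Or.inl h.pA)]
  exact Or.inr (Or.inl ⟨rfl, by rintro rfl; exact h.aA h.pA, by simp⟩)

lemma sq (h : Star H A B a b p q) : Sq H a p b q :=
  ⟨h.adj_a, h.swap'.adj_a.symm, h.swap.swap'.adj_a, h.swap.adj_a.symm, h.ab, by
    rintro rfl; exact h.disj p h.pA h.qB⟩

lemma adj_p (h : Star H A B a b p q) {x : V} (hx : x ∈ A) (hxp : x ≠ p) : H.Adj p x := by
  rw [h.adj p x (Or.inl h.pA) (Or.inl hx)]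
  exact Or.inl (Or.inl ⟨rfl, hxp, Or.inl hx⟩)

lemma gate_eq (h : Star H A B a b p q) {r : V → V} (hr : SqGate H a p b q r) {x : V}
    (hx : x ∈ A) : r x = p := by
  by_cases hxp : x = p
  · rw [hxp, hr.fb]
  · exact hr.rot.adj_a h.sq.rot (h.adj_p hx hxp) (by rintro rfl; exact h.bA hx)
      (by rintro rfl; exact h.aA hx)

lemma numGeodesics_ab (h : Star H A B a b p q) (hH : IsCactus H) : numGeodesics H a b = 2 := by
  obtain ⟨r, hr⟩ := h.sq.exists_gate hH
  exact hr.numGeodesics_ac h.sq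

lemma two_le_numGeodesics [Finite V] (h : Star H A B a b p q) (hH : IsCactus H) {x y : V}
    (hx : x ∈ A) (hy : y ∈ B) : 2 ≤ numGeodesics H x y := by
  obtain ⟨r, hr⟩ := h.sq.exists_gate hH
  have h1 := h.gate_eq hr hx
  have h2 := h.swap.gate_eq hr.rot.rot.refl hy
  have h3 := hr.rot.numGeodesics_ac h.sq.rot
  have h4 := numGeodesics_pos (hH.1 x p)
  have h5 := numGeodesics_pos (hH.1 q y)
  rw [hr.gate.numGeodesics_of_ne hH.1 (by rw [h1, h2]; exact h.sq.bd), h1, h2, h3]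
  nlinarith

lemma reachable (h : Star H A B a b p q) {x : V} (hx : x ∈ A ∨ x ∈ B ∨ x = a ∨ x = b) :
    H.Reachable x a := by
  have h1 := h.adj_a.reachable
  have h2 := h.swap.adj_a.reachable
  rcases hx with hx | hx | rfl | rfl
  · by_cases hxp : x = p
    · rw [hxp]; exact h1.symm
    · exact (h.adj_p hx hxp).reachable.symm.trans h1.symm
  · by_cases hxp : x = q
    · rw [hxp]; exact h2.symm
    · exact (h.swap.adj_p hx hxp).reachable.symm.trans h2.symm
  · rfl
  · exact h.swap'.adj_a.reachable.trans h1.symm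

end Star

/-- The graph obtained from `G` by keeping the edges inside the fibres of `r` and joining the
fibres by a square with stars at two opposite vertices. -/
def starGraph (G : SimpleGraph V) (r : V → V) (A B : Set V) (a b p q : V) : SimpleGraph V where
  Adj x y := (r x = r y ∧ G.Adj x y) ∨ StarRel A B a b p q x y ∨ StarRel A B a b p q y x
  symm := ⟨fun x y h => by
    rw [Eq.comm, G.adj_comm, or_comm (a := StarRel A B a b p q x y)] at h
    exact h⟩
  loopless := ⟨fun x h => by
    unfold StarRel at h
    have := G.loopless.irrefl x
    tauto⟩

section StarGraph

variable {G : SimpleGraph V} {A B : Set V} {a b p q : V} {r : V → V}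

lemma StarRel.mem {x y : V} (h : StarRel A B a b p q x y) (hp : p ∈ A) (hq : q ∈ B) :
    (x ∈ A ∨ x ∈ B ∨ x = a ∨ x = b) ∧ (y ∈ A ∨ y ∈ B ∨ y = a ∨ y = b) ∧ x ≠ y := by
  rcases h with ⟨rfl, h1, h2⟩ | ⟨rfl, h1, h2⟩
  · exact ⟨Or.inl hp, by tauto, h1.symm⟩
  · exact ⟨Or.inr (Or.inl hq), by tauto, h1.symm⟩

lemma ncard_starRel [Finite V] (hp : p ∈ A) (hq : q ∈ B) (hd : ∀ x ∈ A, x ∉ B) (haA : a ∉ A)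
    (haB : a ∉ B) (hbA : b ∉ A) (hbB : b ∉ B) (hab : a ≠ b) :
    {e | ∃ x y, e = s(x, y) ∧ StarRel A B a b p q x y}.ncard =
      {x | x ∈ A ∨ x ∈ B ∨ x = a ∨ x = b}.ncard := by
  have h1 : {e | ∃ x y, e = s(x, y) ∧ StarRel A B a b p q x y} =
      (fun y => s(p, y)) '' ((A \ {p}) ∪ {a, b}) ∪ (fun y => s(q, y)) '' ((B \ {q}) ∪ {a, b}) := by
    have hap : a ≠ p := by rintro rfl; exact haA hp
    have hbp : b ≠ p := by rintro rfl; exact hbA hp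
    have haq : a ≠ q := by rintro rfl; exact haB hq
    have hbq : b ≠ q := by rintro rfl; exact hbB hq
    ext e
    constructor
    · rintro ⟨x, y, rfl, ⟨rfl, h1, h2⟩ | ⟨rfl, h1, h2⟩⟩
      · refine Or.inl ⟨y, ?_, rfl⟩
        rcases h2 with h2 | h2 | h2
        exacts [Or.inl ⟨h2, h1⟩, Or.inr (Or.inl h2), Or.inr (Or.inr h2)]
      · refine Or.inr ⟨y, ?_, rfl⟩
        rcases h2 with h2 | h2 | h2
        exacts [Or.inl ⟨h2, h1⟩, Or.inr (Or.inl h2), Or.inr (Or.inr h2)]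
    · rintro (⟨y, ⟨h1, h2⟩ | rfl | rfl, rfl⟩ | ⟨y, ⟨h1, h2⟩ | rfl | rfl, rfl⟩)
      · exact ⟨p, y, rfl, Or.inl ⟨rfl, h2, Or.inl h1⟩⟩
      · exact ⟨p, _, rfl, Or.inl ⟨rfl, hap, by simp⟩⟩
      · exact ⟨p, _, rfl, Or.inl ⟨rfl, hbp, by simp⟩⟩
      · exact ⟨q, y, rfl, Or.inr ⟨rfl, h2, Or.inl h1⟩⟩
      · exact ⟨q, _, rfl, Or.inr ⟨rfl, haq, by simp⟩⟩
      · exact ⟨q, _, rfl, Or.inr ⟨rfl, hbq, by simp⟩⟩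
  have h2 : {x | x ∈ A ∨ x ∈ B ∨ x = a ∨ x = b} = A ∪ (B ∪ {a, b}) := rfl
  have hpq : p ≠ q := by rintro rfl; exact hd p hp hq
  rw [h1, h2, Set.ncard_union_eq, Set.ncard_union_eq, Set.ncard_union_eq,
    Set.ncard_image_of_injective _ (fun _ _ h => Sym2.congr_right.1 h),
    Set.ncard_image_of_injective _ (fun _ _ h => Sym2.congr_right.1 h),
    Set.ncard_union_eq, Set.ncard_union_eq, Set.ncard_pair hab,
    ← Set.ncard_sdiff_singleton_add_one hp, ← Set.ncard_sdiff_singleton_add_one hq]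
  · omega
  · rw [Set.disjoint_right]
    rintro x (rfl | rfl) h
    exacts [haB h.1, hbB h.1]
  · rw [Set.disjoint_right]
    rintro x (rfl | rfl) h
    exacts [haA h.1, hbA h.1]
  · rw [Set.disjoint_right]
    rintro x (rfl | rfl) h
    exacts [haB h, hbB h]
  · rw [Set.disjoint_left]
    rintro x hx (h | rfl | rfl)
    exacts [hd x hx h, haA hx, hbA hx]
  · rw [Set.disjoint_left]
    rintro _ ⟨x, hx, rfl⟩ ⟨y, hy, h⟩
    simp only [Sym2.eq_iff] at h
    rcases h with ⟨h, -⟩ | ⟨rfl, rfl⟩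
    · exact hpq h.symm
    · rcases hx with ⟨h, -⟩ | rfl | rfl
      exacts [hd _ h hq, haB hq, hbB hq]

/-- Replacing the edges between different fibres of a gate map by a square with stars at two
opposite vertices, without changing the number of edges, produces another cactus. -/
lemma exists_star [Fintype V] (hG : IsCactus G)
    (hr : Gate G {x | x ∈ A ∨ x ∈ B ∨ x = a ∨ x = b} r)
    (hp : p ∈ A) (hq : q ∈ B) (hd : ∀ x ∈ A, x ∉ B) (haA : a ∉ A)
    (haB : a ∉ B) (hbA : b ∉ A) (hbB : b ∉ B) (hab : a ≠ b)
    (hE : {e ∈ G.edgeSet | ¬ (e.map r).IsDiag}.ncard =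
      {x | x ∈ A ∨ x ∈ B ∨ x = a ∨ x = b}.ncard) :
    ∃ G' : SimpleGraph V, IsCactus G' ∧ Star G' A B a b p q ∧
      Gate G' {x | x ∈ A ∨ x ∈ B ∨ x = a ∨ x = b} r ∧
      (∀ u v, r u = r v → (G.Adj u v ↔ G'.Adj u v)) ∧
      (cycleEdgeSets G').ncard = (cycleEdgeSets G).ncard := by
  set G' := starGraph G r A B a b p q with hG'
  set X : Set V := {x | x ∈ A ∨ x ∈ B ∨ x = a ∨ x = b} with hX
  have hrel : ∀ x y, StarRel A B a b p q x y → r x ≠ r y := fun x y h => by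
    obtain ⟨h1, h2, h3⟩ := h.mem hp hq
    rwa [hr.fix x h1, hr.fix y h2]
  have hadj : ∀ u v, r u = r v → (G.Adj u v ↔ G'.Adj u v) := fun u v huv =>
    ⟨fun h => Or.inl ⟨huv, h⟩, fun h => by
      rcases h with h | h | h
      exacts [h.2, absurd huv (hrel _ _ h), absurd huv.symm (hrel _ _ h)]⟩
  have hne : ∀ u v, r u ≠ r v →
      (G'.Adj u v ↔ StarRel A B a b p q u v ∨ StarRel A B a b p q v u) := fun u v huv =>
    ⟨fun h => h.resolve_left fun h => huv h.1, Or.inr⟩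
  have hr' : Gate G' X r := ⟨hr.mem, hr.fix, fun u v h => by
    rcases h with h | h | h
    · exact Or.inl h.1
    · exact Or.inr ⟨(h.mem hp hq).1, (h.mem hp hq).2.1⟩
    · exact Or.inr ⟨(h.mem hp hq).2.1, (h.mem hp hq).1⟩⟩
  have hstar : Star G' A B a b p q := by
    refine ⟨hp, hq, hd, haA, haB, hbA, hbB, hab, fun x y hx hy => ?_, hr'.pathConvex⟩
    by_cases hxy : x = y
    · subst hxy
      refine ⟨fun h => absurd rfl h.ne, fun h => ?_⟩
      rcases h with h | h <;> exact absurd rfl (hrel _ _ h)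
    · exact hne x y (by rwa [hr.fix x hx, hr.fix y hy])
  have hag : ∀ i ∈ X, Agree G G' {v | r v = i} := fun i hi =>
    ⟨(hr.fibre hi).pathConvex, (hr'.fibre hi).pathConvex, fun u hu v hv =>
      hadj u v (Eq.trans hu (Eq.symm hv))⟩
  have hreach : ∀ v, G'.Reachable v a := fun v =>
    ((hag _ (hr.mem v)).reachable rfl (hr.fix _ (hr.mem v)) (hG.1 _ _)).trans
      (hstar.reachable (hr.mem v))
  have hcon : G'.Connected := by
    have : Nonempty V := ⟨a⟩
    exact ⟨fun u v => (hreach u).trans (hreach v).symm⟩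
  have hcac : IsCactus G' := by
    refine isCactus_iff.2 ⟨hcon, fun u _ v _ huv => ?_⟩
    rcases hr'.step u v huv with h | ⟨hu, hv⟩
    · exact (hag _ (hr.mem u)).uniqueDetour (IsCactus.uniqueDetour hG _) u rfl v h.symm huv
    · exact hstar.uniqueDetour u hu v hv huv
  have hed : G.edgeSet.ncard = G'.edgeSet.ncard := by
    refine ncard_edgeSet_eq hadj ?_
    rw [hE, ← ncard_starRel hp hq hd haA haB hbA hbB hab]
    congr 1
    ext e
    constructor
    · rintro ⟨x, y, rfl, h⟩
      exact ⟨Or.inr (Or.inl h), fun h1 => hrel x y h h1⟩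
    · induction e with | _ x y
      rintro ⟨h1, h2⟩
      rcases (hne x y h2).1 h1 with h | h
      · exact ⟨x, y, rfl, h⟩
      · exact ⟨y, x, Sym2.eq_swap, h⟩
  have h1 := IsCactus.card_cycles hG
  have h2 := IsCactus.card_cycles hcac
  exact ⟨G', hcac, hstar, hr', hadj, by omega⟩

end StarGraph

/-! ### Long cycles do not occur in maximal cacti -/

lemma ncard_list {α : Type*} {l : List α} (h : l.Nodup) : {x | x ∈ l}.ncard = l.length := by
  classical
  rw [← List.toFinset_card_of_nodup h, ← Set.ncard_coe_finset]
  congr 1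
  ext x
  simp

/-- In a maximal cactus all cycles have length at most four: a longer cycle can be replaced by a
square with stars at two opposite vertices, so that opposite vertices of the cycle become opposite
or get separated by an opposite pair of the square. -/
lemma MaxCactus.isGirthRestricted [Fintype V] {G : SimpleGraph V} (hM : MaxCactus G) :
    IsGirthRestricted G := by
  intro x c hc
  by_contra hlen
  push Not at hlen
  have h5 : 5 ≤ c.length := by
    have := hc.three_le_length
    omega
  have hG := hM.1
  obtain ⟨r, hr, hre⟩ := cycle_gate hG hc
  obtain ⟨m, hm⟩ : ∃ m, m = c.length / 2 := ⟨_, rfl⟩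
  have hinj : ∀ i j, i < c.length → j < c.length → c.getVert i = c.getVert j → i = j :=
    fun i j hi hj h => hc.getVert_injOn' (by simp; omega) (by simp; omega) h
  set A : Set V := {v | ∃ i, (1 ≤ i ∧ i < m) ∧ v = c.getVert i} with hA
  set B : Set V := {v | ∃ i, (m < i ∧ i < c.length) ∧ v = c.getVert i} with hB
  have hX : {v | v ∈ c.support} =
      {v | v ∈ A ∨ v ∈ B ∨ v = c.getVert 0 ∨ v = c.getVert m} := by
    ext v
    constructor
    · intro hv
      obtain ⟨i, rfl, hi⟩ := mem_support_iff_exists_getVert.1 hv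
      rcases Nat.eq_zero_or_pos i with rfl | h0
      · exact Or.inr (Or.inr (Or.inl rfl))
      rcases lt_trichotomy i m with h | rfl | h
      · exact Or.inl ⟨i, ⟨h0, h⟩, rfl⟩
      · exact Or.inr (Or.inr (Or.inr rfl))
      · rcases hi.lt_or_eq with h1 | rfl
        · exact Or.inr (Or.inl ⟨i, ⟨h, h1⟩, rfl⟩)
        · exact Or.inr (Or.inr (Or.inl (by simp)))
    · rintro (⟨i, -, rfl⟩ | ⟨i, -, rfl⟩ | rfl | rfl) <;> exact c.getVert_mem_support _
  have hE : {e ∈ G.edgeSet | ¬ (e.map r).IsDiag}.ncard = {v | v ∈ c.support}.ncard := by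
    have h1 : {e ∈ G.edgeSet | ¬ (e.map r).IsDiag} = {e | e ∈ c.edges} := by
      ext e
      induction e with | _ u v
      simp only [Set.mem_ofPred_eq, SimpleGraph.mem_edgeSet, Sym2.map_mk, Sym2.mk_isDiag_iff]
      constructor
      · exact fun h => (hre u v h.1).resolve_left h.2
      · intro h
        have hadj := c.adj_of_mem_edges h
        refine ⟨hadj, ?_⟩
        rw [hr.fix u (c.fst_mem_support_of_mem_edges h), hr.fix v (c.snd_mem_support_of_mem_edges h)]
        exact hadj.ne
    have h2 : {v | v ∈ c.support} = {v | v ∈ c.support.tail} := by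
      ext v
      have h3 : x ∈ c.support.tail := end_mem_tail_support hc.not_nil
      constructor
      · intro hv
        rw [Set.mem_ofPred_eq, ← c.cons_tail_support, List.mem_cons] at hv
        rcases hv with rfl | hv
        exacts [h3, hv]
      · exact List.mem_of_mem_tail
    rw [h1, h2, ncard_list hc.edges_nodup, ncard_list hc.support_nodup]
    simp
  rw [hX] at hr hE
  obtain ⟨G', hG', hs, hr', hadj, hcyc⟩ := exists_star (p := c.getVert 1) (q := c.getVert (m + 1))
    hG hr ⟨1, ⟨by omega, by omega⟩, rfl⟩ ⟨m + 1, ⟨by omega, by omega⟩, rfl⟩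
    (by
      rintro _ ⟨i, hi, rfl⟩ ⟨j, hj, h⟩
      have := hinj i j (by omega) (by omega) h
      omega)
    (by
      rintro ⟨j, hj, h⟩
      have := hinj _ j (by omega) (by omega) h
      omega)
    (by
      rintro ⟨j, hj, h⟩
      have := hinj _ j (by omega) (by omega) h
      omega)
    (by
      rintro ⟨j, hj, h⟩
      have := hinj _ j (by omega) (by omega) h
      omega)
    (by
      rintro ⟨j, hj, h⟩
      have := hinj _ j (by omega) (by omega) h
      omega)
    (fun h => by
      have := hinj _ _ (by omega) (by omega) h
      omega) hE
  have key : ∀ i j, i < j → j < c.length →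
      numGeodesics G (c.getVert i) (c.getVert j) ≤ numGeodesics G' (c.getVert i) (c.getVert j) := by
    intro i j hij hj
    obtain ⟨h1, h2⟩ := numGeodesics_cycle hG hc hij hj
    by_cases h3 : 2 * (j - i) = c.length
    · refine h1.trans ?_
      rcases Nat.eq_zero_or_pos i with rfl | h0
      · obtain rfl : j = m := by omega
        exact (hs.numGeodesics_ab hG').ge
      · exact hs.two_le_numGeodesics hG' ⟨i, ⟨h0, by omega⟩, rfl⟩ ⟨j, ⟨by omega, hj⟩, rfl⟩
    · exact (h2 h3).trans (numGeodesics_pos (hG'.1 _ _))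
  have hidx : ∀ v ∈ {v | v ∈ c.support}, ∃ i, i < c.length ∧ v = c.getVert i := by
    rw [hX]
    rintro _ (⟨i, hi, rfl⟩ | ⟨i, hi, rfl⟩ | rfl | rfl)
    exacts [⟨i, by omega, rfl⟩, ⟨i, hi.2, rfl⟩, ⟨0, by omega, rfl⟩, ⟨m, by omega, rfl⟩]
  rw [hX] at hidx
  have hlt : total G < total G' := by
    refine total_lt hr hr' hG.1 hG'.1 hadj (fun u hu v hv => ?_)
      (x := c.getVert 1) (y := c.getVert (m + 2)) ?_
    · obtain ⟨i, hi, rfl⟩ := hidx u hu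
      obtain ⟨j, hj, rfl⟩ := hidx v hv
      rcases lt_trichotomy i j with h | rfl | h
      · exact key i j h hj
      · rw [numGeodesics_self, numGeodesics_self]
      · rw [numGeodesics_comm, numGeodesics_comm G']
        exact key j i h hi
    · -- these vertices are not opposite on the cycle, but on different sides of the square
      have h1 := (numGeodesics_cycle hG hc (i := 1) (j := m + 2) (by omega) (by omega)).2 (by omega)
      have h2 := hs.two_le_numGeodesics hG' (x := c.getVert 1) (y := c.getVert (m + 2))
        ⟨1, ⟨by omega, by omega⟩, rfl⟩ ⟨m + 2, ⟨by omega, by omega⟩, rfl⟩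
      omega
  exact absurd (hM.2 G' hG' hcyc) (by omega)

/-! ### Maximal cacti are unipath resolved -/

section Resolved

variable {G : SimpleGraph V}

/-- An active vertex of a square has a neighbour outside the square. -/
lemma exists_adj_of_active {a b d : V} (h : IsActiveVertex G a) :
    ∃ n, G.Adj a n ∧ n ≠ b ∧ n ≠ d := by
  by_contra! hcon
  have h1 : G.neighborSet a ⊆ {b, d} := by
    intro n hn
    by_cases hb : n = b
    · exact Or.inl hb
    · exact Or.inr (hcon n hn hb)
  have h2 := Set.ncard_le_ncard h1 (Set.toFinite _)
  have h3 := Set.ncard_insert_le b {d}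
  rw [Set.ncard_singleton] at h3
  have h4 := h.2
  omega

variable [Fintype V] [DecidableEq V]

lemma MaxCactus.isAntipodalCactus (hM : MaxCactus G) : IsAntipodalCactus G := by
  refine ⟨hM.1, hM.isGirthRestricted, ?_⟩
  rintro u c hc hl ⟨x, y, hxy, hx, hy, hax, hay⟩
  obtain ⟨b, z, d, hs, he, hv⟩ := exists_sq_of_cycle hc hl hx
  have hb : ¬ IsActiveVertex G b := fun h =>
    hM.not_adjacent_active hs (exists_adj_of_active hax) (exists_adj_of_active h)
  have hd : ¬ IsActiveVertex G d := fun h =>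
    hM.not_adjacent_active hs.rot.rot.rot (exists_adj_of_active h) (exists_adj_of_active hax)
  have hyz : y = z := by
    rcases (hv y).1 hy with rfl | rfl | rfl | rfl
    exacts [absurd rfl hxy, absurd hay hb, rfl, absurd hay hd]
  subst hyz
  refine ⟨x, y, hxy, hx, hy, hax, hay, ?_, ?_⟩
  · intro h
    obtain ⟨r, hr⟩ := hs.exists_gate hM.1
    exact hr.not_adj hs (c.adj_of_mem_edges h)
  · intro w hw haw
    rcases (hv w).1 hw with rfl | rfl | rfl | rfl
    exacts [Or.inl rfl, absurd haw hb, Or.inr rfl, absurd haw hd]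

lemma MaxCactus.ncard_squaresOn (hM : MaxCactus G) {v w : V} (hv : IsSquaredVertex G v)
    (hvw : G.Adj v w) (hw : s(v, w) ∉ squareEdges G) : (squaresOn G v).ncard = 1 := by
  have hsub : (squaresOn G v).Subsingleton := by
    rintro _ ⟨⟨u₁, c₁, hc₁, hl₁, rfl⟩, e₁, he₁, hv₁⟩ _ ⟨⟨u₂, c₂, hc₂, hl₂, rfl⟩, e₂, he₂, hv₂⟩
    obtain ⟨a, z, b, hs₁, hE₁, -⟩ := exists_sq_of_cycle hc₁ hl₁ (c₁.mem_support_of_mem_edges he₁ hv₁)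
    obtain ⟨c, y, d, hs₂, hE₂, -⟩ := exists_sq_of_cycle hc₂ hl₂ (c₂.mem_support_of_mem_edges he₂ hv₂)
    by_contra hne
    have hdis : ∀ e, e ∈ sqEdges v a z b → e ∉ sqEdges v c y d := fun e h1 h2 => hne (by
      ext e'
      exact IsCactus.edges_iff hM.1 hc₁ hc₂ ((hE₁ e).2 h1) ((hE₂ e).2 h2) e')
    refine hM.no_two_squares hs₁ hs₂ ?_ ?_ hvw ?_ ?_ ?_ ?_
    · rintro rfl
      exact hdis s(v, a) (by simp [sqEdges]) (by simp [sqEdges])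
    · rintro rfl
      exact hdis s(v, a) (by simp [sqEdges]) (by simp [sqEdges, Sym2.eq_swap])
    · rintro rfl
      exact hw (hs₁.mem_squareEdges (by simp [sqEdges]))
    · rintro rfl
      exact hw (hs₁.mem_squareEdges (by simp [sqEdges, Sym2.eq_swap]))
    · rintro rfl
      exact hw (hs₂.mem_squareEdges (by simp [sqEdges]))
    · rintro rfl
      exact hw (hs₂.mem_squareEdges (by simp [sqEdges, Sym2.eq_swap]))
  obtain ⟨u, c, hc, hl, hvc⟩ := hv
  obtain ⟨a, z, b, hs, hE, -⟩ := exists_sq_of_cycle hc hl hvc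
  have hmem : {e | e ∈ c.edges} ∈ squaresOn G v :=
    ⟨⟨u, c, hc, hl, rfl⟩, s(v, a), (hE _).2 (by simp [sqEdges]), by simp⟩
  rw [Set.ncard_eq_one]
  exact ⟨_, hsub.eq_singleton_of_mem hmem⟩

lemma MaxCactus.isUnipathResolved (hM : MaxCactus G) : IsUnipathResolved G := by
  refine ⟨hM.isAntipodalCactus, fun C hC => ⟨?_, fun v hv hsq => ?_⟩⟩
  · rintro x ⟨hx, hxs⟩ y ⟨hy, hys⟩
    by_contra hxy
    exact hM.no_two_squared hM.isGirthRestricted hxs hys hxy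
      (ConnectedComponent.exact (Eq.trans hx (Eq.symm hy)))
  · obtain ⟨y, hy, hyv⟩ := hC.exists_ne v
    obtain ⟨w, hw, hws, -⟩ := exists_adj_of_reachable
      (ConnectedComponent.exact (Eq.trans hv (Eq.symm hy))) hyv.symm
    exact hM.ncard_squaresOn hsq hw hws

lemma exists_maxCactus (hG : IsCactus G) : ∃ G' : SimpleGraph V, MaxCactus G' ∧
    (cycleEdgeSets G').ncard = (cycleEdgeSets G).ncard ∧ total G ≤ total G' := by
  classical
  obtain ⟨G', hG', hmax⟩ := Finset.exists_max_image
    (Finset.univ.filter fun G' : SimpleGraph V =>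
      IsCactus G' ∧ (cycleEdgeSets G').ncard = (cycleEdgeSets G).ncard) total
    ⟨G, by simp [hG]⟩
  simp only [Finset.mem_filter, Finset.mem_univ, true_and] at hG' hmax
  exact ⟨G', ⟨hG'.1, fun H hH hc => hmax H ⟨hH, hc.trans hG'.2⟩⟩, hG'.2, hmax G ⟨hG, rfl⟩⟩

end Resolved

end CactusGPN

/-- if a cactus `G` on `n` vertices with `k` cycles is not unipath
resolved, then some unipath resolved cactus `G'` on `n` vertices with `k` cycles has a
strictly larger geodesic subpath number. -/
theorem cactus_not_unipathResolved_not_maximal {V : Type*} [Fintype V] [DecidableEq V]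
    (G : SimpleGraph V) (k : ℕ) (hG : IsCactus G) (hk : (cycleEdgeSets G).ncard = k)
    (hnu : ¬ IsUnipathResolved G) :
    ∃ G' : SimpleGraph V, IsUnipathResolved G' ∧
      (cycleEdgeSets G').ncard = k ∧ gpn G < gpn G' := by
  obtain ⟨G', hM, hc, hle⟩ := CactusGPN.exists_maxCactus hG
  refine ⟨G', hM.isUnipathResolved, hc.trans hk, ?_⟩
  by_contra hlt
  have h1 := CactusGPN.two_mul_gpn G
  have h2 := CactusGPN.two_mul_gpn G'
  -- Without a strict gain, `G` is itself maximal, hence unipath resolved.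
  have hGM : CactusGPN.MaxCactus G :=
    ⟨hG, fun H hH hHc => (hM.2 H hH (hHc.trans hc.symm)).trans (by omega)⟩
  exact hnu hGM.isUnipathResolved
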